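/- Let y ≥ 2 and t be real numbers, let q > 1 be an integer, let χ be a primitive Dirichlet character modulo q whose L-function satisfies the Riemann Hypothesis, and let 2 ≤ x ≤ q. Then log|L(1/2 + 1/log y + it, χ)| ≤ Re ∑_{n ≤ x} [χ(n)Λ(n) / (n^{1/2 + max(1/log y, 1/log x) + it} log n)] · (log(x/n)/log x) + (log q + log⁺ t)/log x + O(1/log x), where the implied constant is absolute. -/

import Mathlib

open Complex Real Finset ArithmeticFunction

def dirichletRH {q : ℕ} [NeZero q] (χ : DirichletCharacter ℂ q) : Prop :=
  ∀ s : ℂ, 0 < s.re → s.re < 1 → DirichletCharacter.LFunction χ s = 0 → s.re = 1 / 2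

/-!
Centred at `1/2`, the completed `L`-function of a primitive character has order of growth less than
`2` and a modulus symmetric about the imaginary axis, so the real part of its logarithmic derivative
is the sum of the contributions of its zeros. Under the Riemann Hypothesis the zeros are purely
imaginary, and each of them contributes a nonnegative amount in the right half-plane. With
a bound for the digamma function this gives
`Re (L'/L)(s) + log q / 2 + log ‖s + 1‖ / 2 + C ≥ 0` for `Re s > 1/2`.

Weighting the Dirichlet series of `L'/L` by `log (x / n)` and shifting contours expresses
`(L'/L)(S) log x + (L'/L)'(S) + ∑_{n ≤ x} χ(n) Λ(n) log (x / n) / n ^ S` as an integral of `L'/L`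
against `x ^ (s - S) / (s - S) ^ 2` along a line to the left of `S`. Once `L'/L` is corrected to
have nonnegative real part, this integral is dominated by one in which `x ^ (s - S)` is replaced by
its modulus, and the Poisson formula of the half-plane evaluates the latter in terms of
`Re (L'/L)(S)`. Integrating in `S` along a horizontal ray from
`σ₀ = 1/2 + max (1 / log y) (1 / log x)` bounds `log |L| log x + Re (L'/L)` at `σ₀ + it`, and the
terms `Re (L'/L)` of the two sides cancel: what remains is the sum over `n ≤ x` and half of
`log q + log⁺ t`. Moving left to `1/2 + 1 / log y`, a distance of at most `1 / log x`, costs at most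
the lower bound for `Re (L'/L)`, which is the other half.
-/

section LogDeriv

open Metric

variable {g : ℂ → ℂ} {c : ℂ} {r M : ℝ}

lemma norm_sub_center_le_of_re_le (hr : 0 < r) (hM : 0 < M)
    (hg : DifferentiableOn ℂ g (ball c r)) (hre : ∀ z ∈ ball c r, (g z - g c).re ≤ M)
    {z : ℂ} (hz : z ∈ closedBall c (r / 2)) : ‖g z - g c‖ ≤ 2 * M := by
  have hz' : ‖z - c‖ ≤ r / 2 := by simpa [dist_eq_norm] using hz
  have hmaps : ∀ u ∈ ball (0 : ℂ) r, c + u ∈ ball c r := fun u hu ↦ by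
    simpa [dist_eq_norm] using hu
  have hdiff : DifferentiableOn ℂ (fun u ↦ g (c + u) - g c) (ball 0 r) :=
    (hg.comp (by fun_prop) hmaps).sub_const _
  have h := Complex.borelCaratheodory_zero hM hdiff (fun u hu ↦ hre _ (hmaps u hu)) hr
    (z := z - c) (by rw [mem_ball_zero_iff]; linarith) (by simp)
  rw [add_sub_cancel] at h
  refine h.trans ((div_le_iff₀ (by linarith)).mpr ?_)
  nlinarith

lemma norm_deriv_le_of_norm_le_closedBall {B s : ℝ} (hs : 0 < s)
    (hg : DifferentiableOn ℂ g (closedBall c s)) (hb : ∀ z ∈ closedBall c s, ‖g z‖ ≤ B)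
    {z : ℂ} (hz : z ∈ closedBall c (s / 2)) : ‖deriv g z‖ ≤ 2 * B / s := by
  have hsub : closedBall z (s / 2) ⊆ closedBall c s :=
    closedBall_subset_closedBall' (by linarith [mem_closedBall.mp hz])
  have h := norm_deriv_le_of_forall_mem_sphere_norm_le (half_pos hs)
    ((hg.mono hsub).mono (closure_ball z (half_pos hs).ne').subset).diffContOnCl
    fun u hu ↦ hb u (hsub (sphere_subset_closedBall hu))
  exact h.trans_eq (by field_simp)

lemma differentiableOn_logDeriv {U : Set ℂ} (hU : IsOpen U) (hg : DifferentiableOn ℂ g U)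
    (hg0 : ∀ z ∈ U, g z ≠ 0) : DifferentiableOn ℂ (logDeriv g) U :=
  (hg.deriv hU).div hg hg0

lemma exists_hasDerivAt_logDeriv_norm_le (hr : 0 < r) (hM : 0 < M)
    (hg : DifferentiableOn ℂ g (ball c r)) (hg0 : ∀ z ∈ ball c r, g z ≠ 0)
    (hb : ∀ z ∈ ball c r, ‖g z‖ ≤ Real.exp M * ‖g c‖) :
    ∃ φ : ℂ → ℂ, (∀ z ∈ ball c r, HasDerivAt φ (logDeriv g z) z) ∧
      ∀ z ∈ closedBall c (r / 2), ‖φ z‖ ≤ 2 * M := by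
  obtain ⟨φ, hφc, hφ⟩ :=
    (differentiableOn_logDeriv isOpen_ball hg hg0).isExactOn_ball.with_val_at c 0
  have hconst : ∀ z ∈ ball c r, g z * Complex.exp (-φ z) = g c := by
    have hderiv : ∀ u ∈ ball c r, HasDerivAt (fun u ↦ g u * Complex.exp (-φ u)) 0 u := by
      intro u hu
      have hgu := (hg.differentiableAt (isOpen_ball.mem_nhds hu)).hasDerivAt
      refine (hgu.fun_mul (hφ u hu).fun_neg.cexp).congr_deriv ?_
      have := hg0 u hu
      rw [logDeriv_apply]
      field_simp
      ring
    intro z hz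
    have h := isOpen_ball.is_const_of_deriv_eq_zero (convex_ball c r).isPreconnected
      (fun u hu ↦ (hderiv u hu).differentiableAt.differentiableWithinAt)
      (fun u hu ↦ (hderiv u hu).deriv) hz (mem_ball_self hr)
    simpa [hφc] using h
  have hre : ∀ z ∈ ball c r, (φ z - φ c).re ≤ M := by
    intro z hz
    have hnorm : ‖g z‖ * Real.exp (-(φ z).re) = ‖g c‖ := by
      rw [← hconst z hz, norm_mul, Complex.norm_exp, neg_re]
    have hz0 : 0 < ‖g z‖ := norm_pos_iff.mpr (hg0 z hz)
    have h := hb z hz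
    rw [← hnorm, mul_left_comm, ← Real.exp_add] at h
    have := Real.one_le_exp_iff.mp (le_of_mul_le_mul_left ((mul_one _).trans_le h) hz0)
    rw [hφc, sub_zero]
    linarith
  refine ⟨φ, hφ, fun z hz ↦ ?_⟩
  simpa [hφc] using norm_sub_center_le_of_re_le hr hM
    (fun u hu ↦ (hφ u hu).differentiableAt.differentiableWithinAt) hre hz

lemma norm_logDeriv_le_of_norm_le_exp (hr : 0 < r) (hM : 0 < M)
    (hg : DifferentiableOn ℂ g (ball c r)) (hg0 : ∀ z ∈ ball c r, g z ≠ 0)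
    (hb : ∀ z ∈ ball c r, ‖g z‖ ≤ Real.exp M * ‖g c‖) {z : ℂ} (hz : z ∈ closedBall c (r / 4)) :
    ‖logDeriv g z‖ ≤ 8 * M / r := by
  obtain ⟨φ, hφ, hφb⟩ := exists_hasDerivAt_logDeriv_norm_le hr hM hg hg0 hb
  have hball : ∀ {u s}, u ∈ closedBall c s → s < r → u ∈ ball c r := fun hu hs ↦
    closedBall_subset_ball hs hu
  have h := norm_deriv_le_of_norm_le_closedBall (half_pos hr)
    (fun u hu ↦ (hφ u (hball hu (by linarith))).differentiableAt.differentiableWithinAt) hφb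
    (z := z) (by rwa [div_div, show (2 : ℝ) * 2 = 4 by norm_num])
  rw [(hφ z (hball hz (by linarith))).deriv] at h
  exact h.trans_eq (by field_simp; norm_num)

lemma norm_logDeriv_sub_le_of_norm_le_exp (hr : 0 < r) (hM : 0 < M)
    (hg : DifferentiableOn ℂ g (ball c r)) (hg0 : ∀ z ∈ ball c r, g z ≠ 0)
    (hb : ∀ z ∈ ball c r, ‖g z‖ ≤ Real.exp M * ‖g c‖) {z w : ℂ}
    (hz : z ∈ closedBall c (r / 8)) (hw : w ∈ closedBall c (r / 8)) :
    ‖logDeriv g z - logDeriv g w‖ ≤ 64 * M / r ^ 2 * ‖z - w‖ := by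
  have hd := differentiableOn_logDeriv isOpen_ball hg hg0
  refine Convex.norm_image_sub_le_of_norm_deriv_le (fun u hu ↦ ?_) (fun u hu ↦ ?_)
    (convex_closedBall c (r / 8)) hw hz
  · exact hd.differentiableAt
      (isOpen_ball.mem_nhds (closedBall_subset_ball (by linarith) hu))
  · have h := norm_deriv_le_of_norm_le_closedBall (by positivity : 0 < r / 4)
      (hd.mono (closedBall_subset_ball (by linarith)))
      (fun v hv ↦ norm_logDeriv_le_of_norm_le_exp hr hM hg hg0 hb hv)
      (z := u) (by rwa [div_div, show (4 : ℝ) * 2 = 8 by norm_num])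
    exact h.trans_eq (by field_simp; norm_num)

lemma hasDerivAt_log_norm_add_mul_I {F : ℂ → ℂ} {σ t : ℝ}
    (hd : DifferentiableAt ℂ F (σ + t * I)) (h0 : F (σ + t * I) ≠ 0) :
    HasDerivAt (fun u : ℝ ↦ Real.log ‖F (u + t * I)‖) (logDeriv F (σ + t * I)).re σ := by
  have hF : HasDerivAt (fun u : ℝ ↦ F (u + t * I)) (deriv F (σ + t * I)) σ :=
    (hd.hasDerivAt.comp_add_const (σ : ℂ) (t * I)).comp_ofReal
  have hsq := (hF.norm_sq.log (by simpa using h0)).div_const 2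
  have hhalf : ∀ u : ℝ, Real.log (‖F (u + t * I)‖ ^ 2) / 2 = Real.log ‖F (u + t * I)‖ := by
    intro u
    rw [Real.log_pow]
    push_cast
    ring
  simp only [hhalf] at hsq
  refine hsq.congr_deriv ?_
  have hN : normSq (F (σ + t * I)) ≠ 0 := (normSq_pos.mpr h0).ne'
  rw [logDeriv_apply, Complex.inner, div_re, ← normSq_eq_norm_sq, mul_re, conj_re, conj_im]
  field_simp
  ring

end LogDeriv

section ImaginaryZeros

open Metric Filter Topology Asymptotics ComplexConjugate

/-- `g` is what remains of `G` after dividing out finitely many purely imaginary zeros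
`ρ 0, …, ρ (k - 1)` (listed with multiplicity) of modulus at most `R`. -/
structure IsImaginaryFactorization (G : ℂ → ℂ) (R : ℝ) {k : ℕ} (ρ : Fin k → ℂ) (g : ℂ → ℂ) :
    Prop where
  differentiable : Differentiable ℂ g
  norm_le : ∀ i, ‖ρ i‖ ≤ R
  re_eq_zero : ∀ i, (ρ i).re = 0
  eq_prod_mul : ∀ z, G z = (∏ i, (z - ρ i)) * g z

namespace IsImaginaryFactorization

variable {G g : ℂ → ℂ} {R : ℝ} {k : ℕ} {ρ : Fin k → ℂ}

lemma sub_ne_zero (h : IsImaginaryFactorization G R ρ g) {z : ℂ} (hz : z.re ≠ 0) (i : Fin k) :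
    z - ρ i ≠ 0 := fun h0 ↦ hz <| by simpa [h.re_eq_zero i] using congrArg re h0

lemma prod_norm_pos (h : IsImaginaryFactorization G R ρ g) {z : ℂ} (hz : z.re ≠ 0) :
    0 < ∏ i, ‖z - ρ i‖ :=
  prod_pos fun i _ ↦ norm_pos_iff.mpr (h.sub_ne_zero hz i)

lemma norm_eq (h : IsImaginaryFactorization G R ρ g) (z : ℂ) :
    ‖G z‖ = (∏ i, ‖z - ρ i‖) * ‖g z‖ := by
  rw [h.eq_prod_mul, norm_mul, norm_prod]

-- Maximum principle: on `‖w‖ = 4 * R` each factor satisfies `‖w - ρ‖ ≥ 3 * R ≥ 3 / 2 * ‖1 - ρ‖`.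
lemma norm_cofactor_mul_le (h : IsImaginaryFactorization G R ρ g) (hR : 1 ≤ R) {B : ℝ}
    (hB : ∀ z, ‖z‖ ≤ 4 * R → ‖G z‖ ≤ B) {z : ℂ} (hz : ‖z‖ ≤ 4 * R) :
    ‖g z‖ * ((3 / 2) ^ k * ∏ i, ‖1 - ρ i‖) ≤ B := by
  have hpos : 0 < (3 / 2 : ℝ) ^ k * ∏ i, ‖1 - ρ i‖ :=
    mul_pos (by positivity) (h.prod_norm_pos (by simp))
  have hboundary : ∀ w ∈ frontier (ball (0 : ℂ) (4 * R)),
      ‖g w‖ ≤ B / ((3 / 2) ^ k * ∏ i, ‖1 - ρ i‖) := by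
    intro w hw
    rw [frontier_ball _ (by linarith), mem_sphere_zero_iff_norm] at hw
    rw [le_div_iff₀ hpos]
    refine le_trans ?_ (hB w hw.le)
    rw [h.norm_eq, mul_comm, ← Fin.prod_const, ← prod_mul_distrib]
    gcongr with i
    have h1 : ‖1 - ρ i‖ ≤ 1 + R := (norm_sub_le _ _).trans (by simpa using h.norm_le i)
    linarith [norm_sub_norm_le w (ρ i), h.norm_le i]
  rw [← le_div_iff₀ hpos]
  refine norm_le_of_forall_mem_frontier_norm_le isBounded_ball
    h.differentiable.diffContOnCl hboundary ?_
  rwa [closure_ball _ (by linarith), mem_closedBall_zero_iff]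

lemma norm_cofactor_le_mul_cofactor_one (h : IsImaginaryFactorization G R ρ g) (hR : 1 ≤ R)
    {m : ℝ} (hm : ∀ z, ‖z‖ ≤ 4 * R → ‖G z‖ ≤ Real.exp m * ‖G 1‖) {z : ℂ} (hz : ‖z‖ ≤ 4 * R) :
    ‖g z‖ ≤ Real.exp m * ‖g 1‖ := by
  have hP := h.prod_norm_pos (z := 1) (by simp)
  have hpow : (1 : ℝ) ≤ (3 / 2) ^ k := one_le_pow₀ (by norm_num)
  refine le_of_mul_le_mul_right (a := ∏ i, ‖1 - ρ i‖) ?_ hP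
  calc ‖g z‖ * ∏ i, ‖1 - ρ i‖
      ≤ ‖g z‖ * ((3 / 2) ^ k * ∏ i, ‖1 - ρ i‖) := by
        gcongr
        exact le_mul_of_one_le_left hP.le hpow
    _ ≤ Real.exp m * ‖G 1‖ := h.norm_cofactor_mul_le hR hm hz
    _ = Real.exp m * ‖g 1‖ * ∏ i, ‖1 - ρ i‖ := by rw [h.norm_eq]; ring

lemma cons (h : IsImaginaryFactorization G R ρ g) {a : ℂ} (ha : ‖a‖ ≤ R) (hre : a.re = 0)
    (hga : g a = 0) :
    IsImaginaryFactorization G R (Fin.cons a ρ : Fin (k + 1) → ℂ) (dslope g a) where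
  differentiable := by
    rw [← differentiableOn_univ, differentiableOn_dslope univ_mem]
    exact h.differentiable.differentiableOn
  norm_le := Fin.cases (by simpa using ha) fun i ↦ by simpa using h.norm_le i
  re_eq_zero := Fin.cases (by simpa using hre) fun i ↦ by simpa using h.re_eq_zero i
  eq_prod_mul z := by
    have hslope := sub_smul_dslope g a z
    rw [hga, _root_.sub_zero, smul_eq_mul] at hslope
    simp only [Fin.prod_univ_succ, Fin.cons_zero, Fin.cons_succ]
    rw [h.eq_prod_mul, ← hslope]
    ring

lemma norm_cofactor_neg_conj (h : IsImaginaryFactorization G R ρ g)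
    (hsym : ∀ z, ‖G (-conj z)‖ = ‖G z‖) (z : ℂ) : ‖g (-conj z)‖ = ‖g z‖ := by
  rcases eq_or_ne z.re 0 with hz | hz
  · rw [show -conj z = z by apply Complex.ext <;> simp [hz]]
  have hfactor : ∀ i, ‖-conj z - ρ i‖ = ‖z - ρ i‖ := fun i ↦ by
    have hconj : conj (ρ i) = -ρ i := by apply Complex.ext <;> simp [h.re_eq_zero i]
    rw [show -conj z - ρ i = -conj (z - ρ i) by rw [map_sub, hconj]; ring, norm_neg, norm_conj]
  have hG := hsym z
  simp only [h.norm_eq, hfactor] at hG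
  exact mul_left_cancel₀ (h.prod_norm_pos hz).ne' hG

lemma re_logDeriv_cofactor_le (h : IsImaginaryFactorization G R ρ g) {z : ℂ} (hz : 0 < z.re)
    (hgz : g z ≠ 0) : (logDeriv g z).re ≤ (logDeriv G z).re := by
  have hne := h.sub_ne_zero hz.ne'
  have hG : logDeriv G z = logDeriv (fun w ↦ ∏ i, (w - ρ i)) z + logDeriv g z := by
    rw [show G = fun w ↦ (∏ i, (w - ρ i)) * g w from funext h.eq_prod_mul]
    exact logDeriv_mul z (prod_ne_zero_iff.mpr fun i _ ↦ hne i) hgz (by fun_prop)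
      (h.differentiable z)
  rw [hG, logDeriv_prod (fun i _ ↦ hne i) (fun i _ ↦ by fun_prop), add_re, re_sum]
  refine le_add_of_nonneg_left (sum_nonneg fun i _ ↦ ?_)
  rw [logDeriv_apply, deriv_sub_const, deriv_id'', one_div, inv_re]
  exact div_nonneg (by simpa [h.re_eq_zero i] using hz.le) (normSq_nonneg _)

end IsImaginaryFactorization

lemma exists_isImaginaryFactorization {G : ℂ → ℂ} (hG : Differentiable ℂ G)
    (hzero : ∀ z, G z = 0 → z.re = 0) {R : ℝ} (hR : 1 ≤ R) :
    ∃ (k : ℕ) (ρ : Fin k → ℂ) (g : ℂ → ℂ),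
      IsImaginaryFactorization G R ρ g ∧ ∀ z, ‖z‖ ≤ R → g z ≠ 0 := by
  by_contra! hcon
  have hall : ∀ k, ∃ (ρ : Fin k → ℂ) (g : ℂ → ℂ), IsImaginaryFactorization G R ρ g := by
    intro k
    induction k with
    | zero => exact ⟨Fin.elim0, G, hG, fun i ↦ i.elim0, fun i ↦ i.elim0, by simp⟩
    | succ k ih =>
      obtain ⟨ρ, g, h⟩ := ih
      obtain ⟨a, ha, hga⟩ := hcon k ρ g h
      exact ⟨_, _, h.cons ha (hzero a (by rw [h.eq_prod_mul, hga, mul_zero])) hga⟩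
  obtain ⟨B, hB⟩ := (isCompact_closedBall (0 : ℂ) (4 * R)).exists_bound_of_continuousOn
    hG.continuous.continuousOn
  have hG1 : 0 < ‖G 1‖ := norm_pos_iff.mpr fun h ↦ by simpa using hzero 1 h
  have hpow : ∀ k : ℕ, (3 / 2 : ℝ) ^ k ≤ B / ‖G 1‖ := by
    intro k
    obtain ⟨ρ, g, h⟩ := hall k
    have hb := h.norm_cofactor_mul_le hR (fun z hz ↦ hB z (by simpa using hz)) (z := 1)
      (by rw [norm_one]; linarith)
    rw [le_div_iff₀ hG1, h.norm_eq]
    linarith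
  obtain ⟨k, hk⟩ := pow_unbounded_of_one_lt (B / ‖G 1‖) (show (1 : ℝ) < 3 / 2 by norm_num)
  exact (hpow k).not_gt hk

-- `u ↦ log ‖g (u + t * I)‖` is even, so its derivative `Re (g' / g)` vanishes at `u = 0`.
lemma re_logDeriv_mul_I_eq_zero {g : ℂ → ℂ} {t : ℝ} (hd : DifferentiableAt ℂ g (t * I))
    (h0 : g (t * I) ≠ 0) (hsym : ∀ z, ‖g (-conj z)‖ = ‖g z‖) : (logDeriv g (t * I)).re = 0 := by
  have hder : HasDerivAt (fun u : ℝ ↦ Real.log ‖g (u + t * I)‖) (logDeriv g (t * I)).re 0 := by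
    simpa using hasDerivAt_log_norm_add_mul_I (F := g) (σ := 0) (t := t) (by simpa using hd)
      (by simpa using h0)
  have heven : ∀ u : ℝ, Real.log ‖g ((-u : ℝ) + t * I)‖ = Real.log ‖g (u + t * I)‖ := by
    intro u
    rw [← hsym, show -conj ((-u : ℝ) + t * I) = u + t * I by apply Complex.ext <;> simp]
  have hder' : HasDerivAt (fun u : ℝ ↦ Real.log ‖g (u + t * I)‖) (-(logDeriv g (t * I)).re) 0 := by
    have h := (hder.comp_of_eq 0 (hasDerivAt_neg 0) neg_zero.symm)
    rw [mul_neg_one] at h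
    exact h.congr_of_eventuallyEq (Eventually.of_forall fun u ↦ (heven u).symm)
  linarith [hder.unique hder']

section Growth

variable {G : ℂ → ℂ} (hG : Differentiable ℂ G) (hsym : ∀ z, ‖G (-conj z)‖ = ‖G z‖)
  (hzero : ∀ z, G z = 0 → z.re = 0)

include hG hsym hzero

lemma neg_le_re_logDeriv_of_norm_le_exp {z : ℂ} (hz : 0 < z.re) {R m : ℝ} (hm0 : 0 < m)
    (hRz : 1 + 8 * (‖z‖ + 1) ≤ R) (hm : ∀ w, ‖w‖ ≤ 4 * R → ‖G w‖ ≤ Real.exp m * ‖G 1‖) :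
    -(64 * m / (R - 1) ^ 2 * z.re) ≤ (logDeriv G z).re := by
  have hz0 := norm_nonneg z
  have hR1 : 0 < R - 1 := by linarith
  obtain ⟨k, ρ, g, h, hg0⟩ := exists_isImaginaryFactorization hG hzero (R := R) (by linarith)
  have hball : ∀ w ∈ ball (1 : ℂ) (R - 1), ‖w‖ ≤ R := by
    intro w hw
    have h1 : ‖w‖ ≤ ‖w - 1‖ + ‖(1 : ℂ)‖ := by simpa using norm_add_le (w - 1) 1
    linarith [mem_ball_iff_norm.mp hw, norm_one (α := ℂ)]
  have hmem : ∀ w : ℂ, ‖w‖ ≤ ‖z‖ → w ∈ closedBall (1 : ℂ) ((R - 1) / 8) := by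
    intro w hw
    rw [mem_closedBall_iff_norm]
    linarith [norm_sub_le w 1, norm_one (α := ℂ)]
  have hIm : ‖(z.im * I : ℂ)‖ ≤ ‖z‖ := by simpa using abs_im_le_norm z
  have haxis : (logDeriv g (z.im * I)).re = 0 :=
    re_logDeriv_mul_I_eq_zero (h.differentiable _) (hg0 _ (by linarith))
      (h.norm_cofactor_neg_conj hsym)
  have hlip := norm_logDeriv_sub_le_of_norm_le_exp hR1 hm0 h.differentiable.differentiableOn
    (fun w hw ↦ hg0 w (hball w hw))
    (fun w hw ↦ h.norm_cofactor_le_mul_cofactor_one (by linarith) hm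
      ((hball w hw).trans (by linarith)))
    (hmem z le_rfl) (hmem _ hIm)
  have hdist : ‖z - z.im * I‖ = z.re := by
    rw [show z - z.im * I = (z.re : ℂ) by apply Complex.ext <;> simp, norm_real,
      Real.norm_of_nonneg hz.le]
  have hre := (abs_le.mp ((abs_re_le_norm _).trans hlip)).1
  rw [sub_re, haxis, _root_.sub_zero, hdist] at hre
  exact hre.trans (h.re_logDeriv_cofactor_le hz (hg0 z (by linarith)))

theorem re_logDeriv_nonneg_of_imaginary_zeros {M : ℝ → ℝ} (hM : M =o[atTop] fun R ↦ R ^ 2)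
    (hgrowth : ∀ᶠ R in atTop, ∀ z, ‖z‖ ≤ R → ‖G z‖ ≤ Real.exp (M R))
    {z : ℂ} (hz : 0 < z.re) : 0 ≤ (logDeriv G z).re := by
  have hG1 : 0 < ‖G 1‖ := norm_pos_iff.mpr fun h ↦ by simpa using hzero 1 h
  have h4 : Tendsto (fun R : ℝ ↦ 4 * R) atTop atTop :=
    tendsto_id.const_mul_atTop (by norm_num)
  set m : ℝ → ℝ := fun R ↦ |M (4 * R)| + (|Real.log ‖G 1‖| + 1)
  have hsq : (fun R : ℝ ↦ R ^ 2) =O[atTop] fun R ↦ (R - 1) ^ 2 := by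
    refine IsBigO.of_bound 4 ((eventually_ge_atTop 2).mono fun R hR ↦ ?_)
    rw [Real.norm_of_nonneg (by positivity), Real.norm_of_nonneg (by positivity)]
    nlinarith
  have hm : m =o[atTop] fun R ↦ (R - 1) ^ 2 := by
    have hM4 : (fun R ↦ |M (4 * R)|) =o[atTop] fun R : ℝ ↦ R ^ 2 := by
      refine ((hM.comp_tendsto h4).trans_isBigO ?_).abs_left
      simp only [Function.comp_def, mul_pow]
      exact isBigO_const_mul_self _ _ _
    exact (hM4.add (isLittleO_const_left.mpr
      (Or.inr (tendsto_norm_atTop_atTop.comp (tendsto_pow_atTop two_ne_zero))))).trans_isBigO hsq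
  have hlim : Tendsto (fun R ↦ -(64 * m R / (R - 1) ^ 2 * z.re)) atTop (𝓝 0) := by
    simpa [mul_div_assoc] using ((hm.tendsto_div_nhds_zero.const_mul 64).mul_const z.re).neg
  refine le_of_tendsto hlim ?_
  filter_upwards [h4.eventually hgrowth, eventually_ge_atTop (1 + 8 * (‖z‖ + 1))] with R hgr hR
  refine neg_le_re_logDeriv_of_norm_le_exp hG hsym hzero hz (by positivity) hR fun w hw ↦ ?_
  refine (hgr w hw).trans ?_
  rw [← Real.exp_log hG1, ← Real.exp_add, Real.exp_le_exp]
  simp only [m]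
  linarith [le_abs_self (M (4 * R)), neg_abs_le (Real.log ‖G 1‖)]

end Growth

end ImaginaryZeros

section Gamma

open Metric Filter Topology

lemma norm_Gamma_le_Gamma_re {z : ℂ} (hz : 0 < z.re) : ‖Complex.Gamma z‖ ≤ Real.Gamma z.re := by
  rw [Complex.Gamma_eq_integral hz, Real.Gamma_eq_integral hz, GammaIntegral]
  refine (MeasureTheory.norm_integral_le_integral_norm _).trans_eq ?_
  refine MeasureTheory.setIntegral_congr_fun measurableSet_Ioi fun x hx ↦ ?_
  have hx : 0 < x := hx
  simp only [norm_mul, norm_real, Real.norm_eq_abs, Real.abs_exp]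
  rw [norm_cpow_eq_rpow_re_of_pos hx, sub_re, one_re]

lemma differentiableAt_Gamma_of_re_pos {z : ℂ} (hz : 0 < z.re) :
    DifferentiableAt ℂ Complex.Gamma z :=
  Complex.differentiableAt_Gamma z fun m h ↦ by
    simp only [h, neg_re, natCast_re, Left.neg_pos_iff] at hz
    exact hz.not_ge m.cast_nonneg

lemma log_Gamma_add_one {x : ℝ} (hx : 0 < x) :
    Real.log (Real.Gamma (x + 1)) = Real.log x + Real.log (Real.Gamma x) := by
  rw [Real.Gamma_add_one hx.ne', Real.log_mul hx.ne' (Real.Gamma_pos_of_pos hx).ne']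

lemma log_Gamma_sub_log_Gamma_le {x y : ℝ} (hx : 0 < x) (hxy : x < y) :
    Real.log (Real.Gamma y) - Real.log (Real.Gamma x) ≤ (y - x) * Real.log y := by
  have hy := hx.trans hxy
  have h := Real.convexOn_log_Gamma.slope_mono_adjacent (x := x) (y := y) (z := y + 1)
    hx (by simpa using by linarith) hxy (lt_add_one y)
  simp only [Function.comp_apply] at h
  rw [log_Gamma_add_one hy, add_sub_cancel_right, add_sub_cancel_left, div_one,
    div_le_iff₀ (sub_pos.mpr hxy)] at h
  linarith

lemma mul_log_le_log_Gamma_sub_log_Gamma {x y : ℝ} (hx : 1 < x) (hxy : x < y) :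
    (y - x) * Real.log (x - 1) ≤ Real.log (Real.Gamma y) - Real.log (Real.Gamma x) := by
  have hx1 : 0 < x - 1 := sub_pos.mpr hx
  have h := Real.convexOn_log_Gamma.slope_mono_adjacent (x := x - 1) (y := x) (z := y)
    hx1 (by simpa using by linarith) (sub_one_lt x) hxy
  have hfe := log_Gamma_add_one hx1
  rw [sub_add_cancel] at hfe
  simp only [Function.comp_apply] at h
  rw [hfe, add_sub_cancel_right, sub_sub_cancel, div_one, ← hfe,
    le_div_iff₀ (sub_pos.mpr hxy)] at h
  linarith

lemma abs_log_sub_log_le_one {s t : ℝ} (ht : 0 < t) (h₁ : t / 2 ≤ s) (h₂ : s ≤ 2 * t) :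
    |Real.log s - Real.log t| ≤ 1 := by
  have hs : 0 < s := by linarith
  have h2 : Real.log 2 ≤ 1 := by linarith [Real.log_two_lt_d9]
  have hl := Real.log_le_log (by positivity) h₁
  have hu := Real.log_le_log hs h₂
  rw [Real.log_div ht.ne' two_ne_zero] at hl
  rw [Real.log_mul two_ne_zero ht.ne'] at hu
  exact abs_le.mpr ⟨by linarith, by linarith⟩

lemma log_Gamma_add_le {x a r : ℝ} (hr : 0 < r) (hx : 2 * (r + 1) ≤ x) (ha : |a| < r) :
    Real.log (Real.Gamma (x + a)) ≤ Real.log (Real.Gamma x) + a * Real.log x + r := by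
  have ha' := abs_lt.mp ha
  rcases lt_trichotomy a 0 with h | rfl | h
  · have hconv := mul_log_le_log_Gamma_sub_log_Gamma (x := x + a) (y := x) (by linarith)
      (by linarith)
    have hlog := abs_le.mp (abs_log_sub_log_le_one (s := x + a - 1) (t := x) (by linarith)
      (by linarith) (by linarith))
    nlinarith
  · simpa using hr.le
  · have hconv := log_Gamma_sub_log_Gamma_le (x := x) (y := x + a) (by linarith) (by linarith)
    have hlog := abs_le.mp (abs_log_sub_log_le_one (s := x + a) (t := x) (by linarith)
      (by linarith) (by linarith))
    nlinarith

lemma logDeriv_Gamma_mul_exp {z : ℂ} (hz : 0 < z.re) (c : ℂ) :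
    logDeriv (fun w ↦ Complex.Gamma w * Complex.exp (-w * c)) z = digamma z - c := by
  have hexp : HasDerivAt (fun w : ℂ ↦ Complex.exp (-w * c))
      (Complex.exp (-z * c) * (-1 * c)) z := ((hasDerivAt_neg z).mul_const c).cexp
  rw [logDeriv_mul (f := Complex.Gamma) (g := fun w ↦ Complex.exp (-w * c)) z
    (Gamma_ne_zero_of_re_pos hz) (Complex.exp_ne_zero _)
    (differentiableAt_Gamma_of_re_pos hz) hexp.differentiableAt, digamma_def, logDeriv_apply _ z,
    logDeriv_apply _ z, hexp.deriv, mul_div_cancel_left₀ _ (Complex.exp_ne_zero _)]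
  ring

lemma norm_Gamma_mul_exp_le {x r : ℝ} (hr : 0 < r) (hx : 2 * (r + 1) ≤ x) {w : ℂ}
    (hw : |w.re - x| < r) :
    ‖Complex.Gamma w * Complex.exp (-w * Real.log x)‖ ≤
      Real.exp r * ‖Complex.Gamma x * Complex.exp (-x * Real.log x)‖ := by
  have hx0 : 0 < x := by linarith
  have hw0 : 0 < w.re := by linarith [(abs_lt.mp hw).1]
  have hGw := Real.Gamma_pos_of_pos hw0
  have hGx := Real.Gamma_pos_of_pos hx0
  have hconv := log_Gamma_add_le hr hx hw
  rw [add_sub_cancel] at hconv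
  simp only [norm_mul, Complex.norm_exp, re_mul_ofReal, neg_re, ofReal_re, Complex.Gamma_ofReal,
    norm_real, Real.norm_of_nonneg hGx.le]
  calc ‖Complex.Gamma w‖ * Real.exp (-w.re * Real.log x)
      ≤ Real.Gamma w.re * Real.exp (-w.re * Real.log x) := by
        gcongr
        exact norm_Gamma_le_Gamma_re hw0
    _ ≤ Real.exp r * (Real.Gamma x * Real.exp (-x * Real.log x)) := by
        rw [← Real.exp_log hGw, ← Real.exp_log hGx]
        simp only [← Real.exp_add, Real.exp_le_exp]
        linarith

lemma eventually_norm_digamma_add_natCast_sub_log_le (z : ℂ) :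
    ∀ᶠ N : ℕ in atTop, ‖digamma (z + N) - Real.log N‖ ≤ 8 := by
  set r : ℝ := 4 * (‖z‖ + 1)
  have hr : 0 < r := by positivity
  filter_upwards [tendsto_natCast_atTop_atTop.eventually_ge_atTop (2 * (r + 1))] with N hN
  have hre : ∀ w ∈ ball (N : ℂ) r, |w.re - N| < r := fun w hw ↦ by
    simpa using (abs_re_le_norm _).trans_lt (mem_ball_iff_norm.mp hw)
  have hpos : ∀ w ∈ ball (N : ℂ) r, 0 < w.re := fun w hw ↦ by
    linarith [(abs_lt.mp (hre w hw)).1]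
  have hmem : z + N ∈ closedBall (N : ℂ) (r / 4) := by simp [r, dist_eq_norm]
  rw [← logDeriv_Gamma_mul_exp (hpos _ (closedBall_subset_ball (by linarith) hmem))]
  refine (norm_logDeriv_le_of_norm_le_exp hr hr (fun w hw ↦ ?_) (fun w hw ↦ ?_)
    (fun w hw ↦ ?_) hmem).trans_eq (mul_div_cancel_right₀ 8 hr.ne')
  · have := differentiableAt_Gamma_of_re_pos (hpos w hw)
    exact DifferentiableAt.differentiableWithinAt (by fun_prop)
  · exact mul_ne_zero (Gamma_ne_zero_of_re_pos (hpos w hw)) (Complex.exp_ne_zero _)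
  · exact_mod_cast norm_Gamma_mul_exp_le hr hN (hre w hw)

lemma log_norm_one_add_le {w : ℂ} (hw : 1 + w ≠ 0) :
    Real.log ‖1 + w‖ ≤ w.re + ‖w‖ ^ 2 / 2 := by
  have hsq : ‖1 + w‖ ^ 2 ≤ Real.exp (2 * w.re + ‖w‖ ^ 2) := by
    refine le_trans (le_of_eq ?_) (Real.add_one_le_exp _)
    simp only [Complex.sq_norm, normSq_apply, add_re, one_re, add_im, one_im]
    ring
  have hlog := Real.log_le_log (by have := norm_pos_iff.mpr hw; positivity) hsq
  rw [Real.log_exp, Real.log_pow, Nat.cast_ofNat] at hlog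
  linarith

lemma re_digamma_sub_log_norm_le {z : ℂ} (hz : 0 < z.re) :
    (digamma z).re - Real.log ‖z‖ ≤
      (digamma (z + 1)).re - Real.log ‖z + 1‖ + 1 / (2 * z.re ^ 2) := by
  have hz0 : z ≠ 0 := ne_zero_of_re_pos hz
  have hz1 : z + 1 ≠ 0 := ne_zero_of_re_pos (by rw [add_re, one_re]; linarith)
  have hfe : digamma (z + 1) = digamma z + z⁻¹ := digamma_apply_add_one z fun m h ↦ by
    rw [h, neg_re, natCast_re] at hz
    linarith [m.cast_nonneg (α := ℝ)]
  have hinv : 1 + z⁻¹ = (z + 1) / z := by field_simp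
  have hinv0 : 1 + z⁻¹ ≠ 0 := hinv ▸ div_ne_zero hz1 hz0
  have hlog := log_norm_one_add_le hinv0
  have hlog_eq : Real.log ‖1 + z⁻¹‖ = Real.log ‖z + 1‖ - Real.log ‖z‖ := by
    rw [hinv, norm_div, Real.log_div (norm_ne_zero_iff.mpr hz1) (norm_ne_zero_iff.mpr hz0)]
  have hsq : ‖z⁻¹‖ ^ 2 / 2 ≤ 1 / (2 * z.re ^ 2) := by
    rw [norm_inv, inv_pow, ← one_div, div_div, mul_comm]
    gcongr
    exact re_le_norm z
  rw [hfe, add_re]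
  linarith

lemma re_digamma_sub_log_norm_le_add_sum {z : ℂ} (hz : 0 < z.re) (N : ℕ) :
    (digamma z).re - Real.log ‖z‖ ≤
      (digamma (z + N)).re - Real.log ‖z + N‖ + ∑ j ∈ range N, 1 / (2 * (z.re + j) ^ 2) := by
  induction N with
  | zero => simp
  | succ N ih =>
    have h := re_digamma_sub_log_norm_le (z := z + N)
      (by rw [add_re, natCast_re]; positivity)
    rw [sum_range_succ]
    push_cast
    rw [← add_assoc z]
    simp only [add_re, natCast_re] at h
    linarith

lemma summable_one_div_two_mul_add_natCast_sq (δ : ℝ) :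
    Summable fun j : ℕ ↦ 1 / (2 * (δ + j) ^ 2) := by
  have h := (Real.summable_one_div_nat_add_rpow δ 2).mpr one_lt_two
  refine (h.mul_left (1 / 2)).congr fun j ↦ ?_
  rw [Real.rpow_two, sq_abs, add_comm, one_div_mul_one_div]

lemma exists_re_digamma_le_log_norm_add {δ : ℝ} (hδ : 0 < δ) :
    ∃ C : ℝ, 0 ≤ C ∧ ∀ z : ℂ, δ ≤ z.re → (digamma z).re ≤ Real.log ‖z‖ + C := by
  have hsum := summable_one_div_two_mul_add_natCast_sq δ
  refine ⟨8 + ∑' j : ℕ, 1 / (2 * (δ + j) ^ 2), by positivity, fun z hz ↦ ?_⟩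
  have hz0 : 0 < z.re := hδ.trans_le hz
  obtain ⟨N, hN, hN1⟩ :=
    ((eventually_norm_digamma_add_natCast_sub_log_le z).and (eventually_ge_atTop 1)).exists
  have hstep := re_digamma_sub_log_norm_le_add_sum hz0 N
  have hle : ∑ j ∈ range N, 1 / (2 * (z.re + j) ^ 2) ≤ ∑' j : ℕ, 1 / (2 * (δ + j) ^ 2) := by
    refine le_trans ?_ (hsum.sum_le_tsum (range N) fun j _ ↦ by positivity)
    gcongr
  have hfar := (re_le_norm _).trans hN
  rw [sub_re, ofReal_re] at hfar
  have hlog : Real.log N ≤ Real.log ‖z + N‖ := by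
    refine Real.log_le_log (by exact_mod_cast hN1) (le_trans ?_ (re_le_norm _))
    rw [add_re, natCast_re]
    linarith
  linarith

lemma logDeriv_Gammaℝ {s : ℂ} (hs : 0 < s.re) :
    logDeriv Gammaℝ s = -(Real.log Real.pi) / 2 + digamma (s / 2) / 2 := by
  have hs2 : 0 < (s / 2).re := by rw [div_ofNat_re]; positivity
  have hpi : (Real.pi : ℂ) ≠ 0 := ofReal_ne_zero.mpr Real.pi_ne_zero
  have hpow : HasDerivAt (fun s : ℂ ↦ (Real.pi : ℂ) ^ (-s / 2))
      ((Real.pi : ℂ) ^ (-s / 2) * Complex.log Real.pi * (-1 / 2)) s :=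
    ((hasDerivAt_neg s).div_const 2).const_cpow (Or.inl hpi)
  have hGamma : HasDerivAt (fun s : ℂ ↦ Complex.Gamma (s / 2))
      (deriv Complex.Gamma (s / 2) * (1 / 2)) s :=
    HasDerivAt.comp s (h₂ := Complex.Gamma) (differentiableAt_Gamma_of_re_pos hs2).hasDerivAt
      ((hasDerivAt_id s).div_const 2)
  have hpow0 : (Real.pi : ℂ) ^ (-s / 2) ≠ 0 := by simp [cpow_eq_zero_iff, hpi]
  rw [funext Gammaℝ_def, logDeriv_mul (f := fun s : ℂ ↦ (Real.pi : ℂ) ^ (-s / 2))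
    (g := fun s : ℂ ↦ Complex.Gamma (s / 2)) s hpow0 (Gamma_ne_zero_of_re_pos hs2)
    hpow.differentiableAt hGamma.differentiableAt, digamma_def]
  simp only [logDeriv_apply]
  rw [hpow.deriv, hGamma.deriv, ofReal_log Real.pi_pos.le]
  field_simp

lemma exists_re_logDeriv_Gammaℝ_le {δ : ℝ} (hδ : 0 < δ) :
    ∃ C : ℝ, 0 ≤ C ∧ ∀ s : ℂ, δ ≤ s.re →
      (logDeriv Gammaℝ s).re ≤ Real.log ‖s‖ / 2 + C := by
  obtain ⟨C, hC0, hC⟩ := exists_re_digamma_le_log_norm_add (half_pos hδ)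
  refine ⟨C, hC0, fun s hs ↦ ?_⟩
  have hs0 : 0 < ‖s‖ := (hδ.trans_le hs).trans_le (re_le_norm s)
  have hpi : 0 ≤ Real.log Real.pi := Real.log_nonneg (by linarith [Real.two_le_pi])
  have hdig := hC (s / 2) (by rw [div_ofNat_re]; linarith)
  have hlog : Real.log ‖s / 2‖ ≤ Real.log ‖s‖ := by
    refine Real.log_le_log (by simpa using hs0) ?_
    rw [norm_div, Complex.norm_ofNat]
    linarith
  rw [logDeriv_Gammaℝ (hδ.trans_le hs), add_re, div_ofNat_re, div_ofNat_re, neg_re, ofReal_re]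
  linarith

end Gamma

section Summatory

open MeasureTheory Filter Topology

/-- The summatory function `u ↦ ∑_{k ≤ u} f k` of an arithmetic function, starting at `k = 1`. -/
noncomputable def summatory (f : ℕ → ℂ) (u : ℝ) : ℂ := ∑ k ∈ Icc 1 ⌊u⌋₊, f k

variable {f : ℕ → ℂ} {B : ℝ} {s : ℂ}

lemma measurable_summatory (f : ℕ → ℂ) : Measurable (summatory f) :=
  (measurable_from_nat (f := fun n : ℕ ↦ ∑ k ∈ Icc 1 n, f k)).comp Nat.measurable_floor

lemma summatory_of_lt_one (f : ℕ → ℂ) {u : ℝ} (hu : u < 1) : summatory f u = 0 := by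
  simp [summatory, Nat.floor_eq_zero.mpr hu]

lemma mellin_summatory_neg (f : ℕ → ℂ) (s : ℂ) :
    mellin (summatory f) (-s) = ∫ u in Set.Ioi (1 : ℝ), summatory f u * (u : ℂ) ^ (-(s + 1)) := by
  rw [mellin, ← integral_Ici_eq_integral_Ioi (x := (1 : ℝ)),
    ← setIntegral_eq_of_subset_of_forall_sdiff_eq_zero (s := Set.Ici (1 : ℝ))
      (t := Set.Ioi (0 : ℝ)) measurableSet_Ioi (Set.Ici_subset_Ioi.mpr zero_lt_one)]
  · refine setIntegral_congr_fun measurableSet_Ioi fun u _ ↦ ?_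
    simp only [smul_eq_mul]
    rw [mul_comm, neg_add']
  · intro u hu
    rw [summatory_of_lt_one f (not_le.mp hu.2), zero_mul]

lemma differentiableAt_mellin_summatory_neg (hf : ∀ n, ‖∑ k ∈ Icc 1 n, f k‖ ≤ B)
    (hs : 0 < s.re) : DifferentiableAt ℂ (mellin (summatory f)) (-s) := by
  have hloc : LocallyIntegrable (summatory f) :=
    (locallyIntegrable_const B).mono (measurable_summatory f).aestronglyMeasurable
      (.of_forall fun u ↦ (hf _).trans (le_abs_self B))
  refine mellin_differentiableAt_of_isBigO_rpow (a := 0) (b := -s.re - 1)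
    (hloc.locallyIntegrableOn _) ?_ (by simpa) ?_ (by simp)
  · refine .of_bound B (.of_forall fun u ↦ ?_)
    simpa using! hf ⌊u⌋₊
  · refine .of_bound 1 ?_
    filter_upwards [mem_nhdsWithin_of_mem_nhds (Iio_mem_nhds one_pos)] with u hu
    rw [summatory_of_lt_one f hu, norm_zero]
    positivity

lemma norm_mellin_summatory_neg_le (hf : ∀ n, ‖∑ k ∈ Icc 1 n, f k‖ ≤ B) (hs : 0 < s.re) :
    ‖mellin (summatory f) (-s)‖ ≤ B / s.re := by
  have hbound : ∀ u ∈ Set.Ioi (1 : ℝ),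
      ‖summatory f u * (u : ℂ) ^ (-(s + 1))‖ ≤ B * u ^ (-(s.re + 1)) := by
    intro u hu
    have hu0 : 0 < u := one_pos.trans hu
    rw [norm_mul, norm_cpow_eq_rpow_re_of_pos hu0, neg_re, add_re, one_re]
    exact mul_le_mul_of_nonneg_right (hf _) (by positivity)
  have hInt : IntegrableOn (fun u : ℝ ↦ B * u ^ (-(s.re + 1))) (Set.Ioi (1 : ℝ)) :=
    (integrableOn_Ioi_rpow_of_lt (by linarith) one_pos).const_mul _
  rw [mellin_summatory_neg]
  refine (norm_integral_le_of_norm_le hInt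
    ((ae_restrict_iff' measurableSet_Ioi).mpr (.of_forall hbound))).trans_eq ?_
  rw [integral_const_mul, integral_Ioi_rpow_of_lt (by linarith) one_pos, Real.one_rpow]
  rw [show -(s.re + 1) + 1 = -s.re by ring, neg_div_neg_eq, mul_one_div]

lemma LSeriesSummable_of_norm_sum_le (hf : ∀ n, ‖∑ k ∈ Icc 1 n, f k‖ ≤ B) (hs : 1 < s.re) :
    LSeriesSummable f s := by
  refine LSeriesSummable_of_bounded_of_one_lt_re (m := B + B) (fun n hn ↦ ?_) hs
  obtain ⟨m, rfl⟩ := Nat.exists_eq_succ_of_ne_zero hn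
  have hterm : f (m + 1) = ∑ k ∈ Icc 1 (m + 1), f k - ∑ k ∈ Icc 1 m, f k := by
    rw [sum_Icc_succ_top (Nat.le_add_left 1 m), add_sub_cancel_left]
  rw [Nat.succ_eq_add_one, hterm]
  exact (norm_sub_le _ _).trans (add_le_add (hf _) (hf _))

lemma eq_mul_mellin_summatory_neg {F : ℂ → ℂ} (hF : DifferentiableOn ℂ F {s | 0 < s.re})
    (hFf : ∀ s : ℂ, 1 < s.re → F s = LSeries f s) (hf : ∀ n, ‖∑ k ∈ Icc 1 n, f k‖ ≤ B)
    (hs : 0 < s.re) : F s = s * mellin (summatory f) (-s) := by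
  have hopen : IsOpen {s : ℂ | 0 < s.re} := isOpen_lt continuous_const continuous_re
  have hmellin : DifferentiableOn ℂ (fun s ↦ s * mellin (summatory f) (-s)) {s | 0 < s.re} :=
    fun s hs ↦ (differentiableAt_id.mul <| DifferentiableAt.comp (g := mellin (summatory f)) s
      (differentiableAt_mellin_summatory_neg hf hs)
      differentiable_neg.differentiableAt).differentiableWithinAt
  refine (hF.analyticOnNhd hopen).eqOn_of_preconnected_of_eventuallyEq (z₀ := 2)
    (hmellin.analyticOnNhd hopen) (convex_halfSpace_re_gt 0).isPreconnected (by simp) ?_ hs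
  have hnhds : {s : ℂ | 1 < s.re} ∈ 𝓝 (2 : ℂ) :=
    (isOpen_lt continuous_const continuous_re).mem_nhds (by simp)
  filter_upwards [hnhds] with s (hs : 1 < s.re)
  rw [hFf s hs, mellin_summatory_neg, LSeries_eq_mul_integral f le_rfl (by linarith)
    (LSeriesSummable_of_norm_sum_le hf hs)]
  · rfl
  · refine .of_bound B (.of_forall fun n ↦ ?_)
    simpa using hf n

lemma norm_le_of_eq_LSeries {F : ℂ → ℂ} (hF : DifferentiableOn ℂ F {s | 0 < s.re})
    (hFf : ∀ s : ℂ, 1 < s.re → F s = LSeries f s) (hf : ∀ n, ‖∑ k ∈ Icc 1 n, f k‖ ≤ B)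
    (hs : 0 < s.re) : ‖F s‖ ≤ B * ‖s‖ / s.re := by
  rw [eq_mul_mellin_summatory_neg hF hFf hf hs, norm_mul, mul_comm B, mul_div_assoc]
  gcongr
  exact norm_mellin_summatory_neg_le hf hs

end Summatory

section CompletedLFunction

open DirichletCharacter Filter Topology ComplexConjugate

variable {q : ℕ} {χ : DirichletCharacter ℂ q} {s : ℂ}

lemma one_lt_of_dirichletCharacter_ne_one [NeZero q] (hχ : χ ≠ 1) : 1 < q := by
  refine lt_of_le_of_ne NeZero.one_le fun hq ↦ hχ ?_
  subst hq
  exact level_one χ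

lemma sum_range_dirichletCharacter_eq_zero [NeZero q] (hχ : χ ≠ 1) :
    ∑ k ∈ range q, χ k = 0 := by
  obtain ⟨Q, rfl⟩ := Nat.exists_eq_succ_of_ne_zero (NeZero.ne q)
  rw [← χ.sum_eq_zero_of_ne_one hχ, sum_range]
  refine sum_congr rfl fun i _ ↦ ?_
  congr 1
  exact Fin.cast_val_eq_self i

lemma norm_sum_range_dirichletCharacter_le [NeZero q] (hχ : χ ≠ 1) (m : ℕ) :
    ‖∑ k ∈ range m, χ k‖ ≤ q := by
  induction m using Nat.strong_induction_on with
  | _ m ih =>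
    rcases lt_or_ge m q with hm | hm
    · calc ‖∑ k ∈ range m, χ k‖ ≤ ∑ _ ∈ range m, (1 : ℝ) :=
          (norm_sum_le _ _).trans (sum_le_sum fun k _ ↦ χ.norm_le_one _)
        _ ≤ q := by simpa using hm.le
    · obtain ⟨d, rfl⟩ := Nat.exists_eq_add_of_le hm
      rw [sum_range_add, sum_range_dirichletCharacter_eq_zero hχ, zero_add]
      simpa using ih d (by have := NeZero.pos q; lia)

lemma norm_sum_Icc_dirichletCharacter_le [NeZero q] (hχ : χ ≠ 1) (n : ℕ) :
    ‖∑ k ∈ Icc 1 n, χ k‖ ≤ q := by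
  have hzero : χ ((0 : ℕ) : ZMod q) = 0 := by
    rw [Nat.cast_zero]
    exact χ.map_zero' (one_lt_of_dirichletCharacter_ne_one hχ).ne'
  have hsum : ∑ k ∈ range (n + 1), χ k = ∑ k ∈ Icc 1 n, χ k := by
    rw [sum_range_eq_add_Ico _ n.succ_pos, hzero, zero_add]
    rfl
  exact hsum ▸ norm_sum_range_dirichletCharacter_le hχ (n + 1)

lemma norm_LFunction_le [NeZero q] (hχ : χ ≠ 1) (hs : 0 < s.re) :
    ‖LFunction χ s‖ ≤ q * ‖s‖ / s.re :=
  norm_le_of_eq_LSeries (differentiable_LFunction hχ).differentiableOn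
    (fun _ hs ↦ LFunction_eq_LSeries χ hs) (norm_sum_Icc_dirichletCharacter_le hχ) hs

lemma Gammaℝ_conj (s : ℂ) : Gammaℝ (conj s) = conj (Gammaℝ s) := by
  have harg : (Real.pi : ℂ).arg ≠ Real.pi := by
    rw [arg_ofReal_of_nonneg Real.pi_pos.le]
    exact Real.pi_pos.ne
  have hpow := conj_cpow (Real.pi : ℂ) (conj (-s / 2)) harg
  rw [conj_ofReal, Complex.conj_conj, map_div₀, map_neg, Complex.conj_ofNat] at hpow
  rw [Gammaℝ_def, Gammaℝ_def, map_mul, ← Gamma_conj, map_div₀, Complex.conj_ofNat, hpow]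

lemma inv_dirichletCharacter_apply [NeZero q] (χ : DirichletCharacter ℂ q) (a : ZMod q) :
    χ⁻¹ a = conj (χ a) :=
  (MulChar.star_apply' χ a).symm

lemma gammaFactor_inv [NeZero q] (χ : DirichletCharacter ℂ q) (s : ℂ) :
    gammaFactor χ⁻¹ s = conj (gammaFactor χ (conj s)) := by
  rcases χ.even_or_odd with h | h
  · have hinv : χ⁻¹.Even := by
      rw [DirichletCharacter.Even, inv_dirichletCharacter_apply, show χ (-1) = _ from h, map_one]
    rw [h.gammaFactor_def, hinv.gammaFactor_def, Gammaℝ_conj, Complex.conj_conj]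
  · have hinv : χ⁻¹.Odd := by
      rw [DirichletCharacter.Odd, inv_dirichletCharacter_apply, show χ (-1) = _ from h, map_neg,
        map_one]
    rw [h.gammaFactor_def, hinv.gammaFactor_def, ← Gammaℝ_conj, map_add, map_one,
      Complex.conj_conj]

lemma gammaFactor_ne_zero_of_re_pos (χ : DirichletCharacter ℂ q) (hs : 0 < s.re) :
    gammaFactor χ s ≠ 0 := by
  rcases χ.even_or_odd with h | h
  · rw [h.gammaFactor_def]
    exact Gammaℝ_ne_zero_of_re_pos hs
  · rw [h.gammaFactor_def]
    exact Gammaℝ_ne_zero_of_re_pos (by rw [add_re, one_re]; linarith)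

lemma completedLFunction_eq_gammaFactor_mul [NeZero q] (χ : DirichletCharacter ℂ q)
    (hs : 0 < s.re) : completedLFunction χ s = gammaFactor χ s * LFunction χ s := by
  rw [LFunction_eq_completed_div_gammaFactor χ s (.inl (ne_zero_of_re_pos hs)),
    mul_div_cancel₀ _ (gammaFactor_ne_zero_of_re_pos χ hs)]

lemma LSeries_inv_dirichletCharacter [NeZero q] (χ : DirichletCharacter ℂ q) (s : ℂ) :
    LSeries (fun n ↦ χ⁻¹ n) s = conj (LSeries (fun n ↦ χ n) (conj s)) := by
  rw [LSeries, LSeries, Complex.conj_tsum]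
  refine tsum_congr fun n ↦ ?_
  have harg : (n : ℂ).arg ≠ Real.pi := by
    rw [natCast_arg]
    exact Real.pi_pos.ne
  rw [LSeries.term_def, LSeries.term_def, apply_ite conj, _root_.map_zero, map_div₀,
    ← inv_dirichletCharacter_apply, ← conj_cpow _ _ harg, Complex.conj_natCast]

lemma completedLFunction_inv [NeZero q] (hχ : χ ≠ 1) (s : ℂ) :
    completedLFunction χ⁻¹ s = conj (completedLFunction χ (conj s)) := by
  have hconj : Differentiable ℂ fun s ↦ conj (completedLFunction χ (conj s)) := fun s ↦ by
    simpa [Function.comp_def] using (differentiable_completedLFunction hχ (conj s)).conj_conj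
  have hinv := differentiable_completedLFunction (inv_ne_one.mpr hχ)
  refine congrFun (AnalyticOnNhd.eq_of_eventuallyEq (𝕜 := ℂ) (z₀ := 2)
    (hinv.differentiableOn.analyticOnNhd isOpen_univ)
    (hconj.differentiableOn.analyticOnNhd isOpen_univ) ?_) s
  have hnhds : {s : ℂ | 1 < s.re} ∈ 𝓝 (2 : ℂ) :=
    (isOpen_lt continuous_const continuous_re).mem_nhds (by simp)
  filter_upwards [hnhds] with s (hs : 1 < s.re)
  have hs' : 1 < (conj s).re := by rwa [conj_re]
  rw [completedLFunction_eq_gammaFactor_mul _ (one_pos.trans hs),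
    completedLFunction_eq_gammaFactor_mul _ (one_pos.trans hs'), map_mul, gammaFactor_inv,
    LFunction_eq_LSeries _ hs, LFunction_eq_LSeries _ hs', LSeries_inv_dirichletCharacter]

lemma norm_completedLFunction_one_sub [NeZero q] (hχ : χ ≠ 1) (hp : χ.IsPrimitive) (s : ℂ) :
    ‖completedLFunction χ (1 - s)‖ =
      (q : ℝ) ^ (s.re - 1 / 2) * ‖rootNumber χ‖ * ‖completedLFunction χ (conj s)‖ := by
  have hq : 0 < (q : ℝ) := by exact_mod_cast NeZero.pos q
  rw [hp.completedLFunction_one_sub, completedLFunction_inv hχ, norm_mul, norm_mul,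
    ← ofReal_natCast, norm_cpow_eq_rpow_re_of_pos hq, norm_conj]
  simp

-- Applying the functional equation at `2` and then at `-1` returns to the start.
lemma norm_rootNumber [NeZero q] (hχ : χ ≠ 1) (hp : χ.IsPrimitive) : ‖rootNumber χ‖ = 1 := by
  have hq : 0 < (q : ℝ) := by exact_mod_cast NeZero.pos q
  have hne : ‖completedLFunction χ 2‖ ≠ 0 := by
    rw [norm_ne_zero_iff, completedLFunction_eq_gammaFactor_mul χ (by simp)]
    exact mul_ne_zero (gammaFactor_ne_zero_of_re_pos χ (by simp))
      (LFunction_ne_zero_of_one_le_re χ (.inl hχ) (by simp))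
  have htwo := norm_completedLFunction_one_sub hχ hp 2
  have hneg := norm_completedLFunction_one_sub hχ hp (-1)
  rw [Complex.conj_ofNat] at htwo
  rw [map_neg, map_one, show (-1 : ℂ) = 1 - 2 by norm_num, htwo, sub_sub_cancel] at hneg
  have hpow : (q : ℝ) ^ ((1 - 2 : ℂ).re - 1 / 2) * (q : ℝ) ^ ((2 : ℂ).re - 1 / 2) = 1 := by
    rw [← Real.rpow_add hq]
    norm_num
  have hsq : ‖rootNumber χ‖ ^ 2 = 1 := by
    refine mul_left_cancel₀ hne ?_
    linear_combination (-1 : ℝ) * hneg - ‖completedLFunction χ 2‖ * ‖rootNumber χ‖ ^ 2 * hpow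
  exact (pow_eq_one_iff_of_nonneg (norm_nonneg _) two_ne_zero).mp hsq

/-- The function `z ↦ q ^ (z / 2) * Λ(1/2 + z, χ)`, where `Λ` is the completed `L`-function. This
is the normalization for which the functional equation of a primitive character says that the
modulus is invariant under reflection in the imaginary axis. -/
noncomputable def centeredLFunction [NeZero q] (χ : DirichletCharacter ℂ q) (z : ℂ) : ℂ :=
  cexp (z * (Real.log q / 2 : ℝ)) * completedLFunction χ (1 / 2 + z)

lemma differentiable_centeredLFunction [NeZero q] (hχ : χ ≠ 1) :
    Differentiable ℂ (centeredLFunction χ) := by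
  have hshift : Differentiable ℂ fun z ↦ completedLFunction χ (1 / 2 + z) :=
    (differentiable_completedLFunction hχ).comp (differentiable_id.const_add _)
  unfold centeredLFunction
  fun_prop

lemma norm_centeredLFunction_neg_conj [NeZero q] (hχ : χ ≠ 1) (hp : χ.IsPrimitive) (z : ℂ) :
    ‖centeredLFunction χ (-conj z)‖ = ‖centeredLFunction χ z‖ := by
  have hq : 0 < (q : ℝ) := by exact_mod_cast NeZero.pos q
  have hfe := norm_completedLFunction_one_sub hχ hp (1 / 2 + conj z)
  have hone : (1 : ℂ) - (1 / 2 + conj z) = 1 / 2 + -conj z := by ring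
  have hhalf : conj (1 / 2 : ℂ) = 1 / 2 := by rw [map_div₀, map_one, Complex.conj_ofNat]
  have hre : (1 / 2 + conj z).re - 1 / 2 = z.re := by simp
  rw [hone, norm_rootNumber hχ hp, mul_one, map_add, hhalf, Complex.conj_conj, hre] at hfe
  rw [centeredLFunction, centeredLFunction, norm_mul, norm_mul, hfe, ← mul_assoc,
    Complex.norm_exp, Complex.norm_exp, re_mul_ofReal, re_mul_ofReal, Real.rpow_def_of_pos hq,
    ← Real.exp_add, neg_re, conj_re]
  ring_nf

end CompletedLFunction

section Growth

open DirichletCharacter Filter Topology ComplexConjugate Asymptotics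

lemma norm_Gammaℝ_le {s : ℂ} {n : ℕ} (hs : 1 / 2 ≤ s.re) (hn : s.re ≤ 2 * (n + 1)) :
    ‖Gammaℝ s‖ ≤ Real.Gamma (1 / 4) + n.factorial := by
  have hre : (s / 2).re = s.re / 2 := div_ofNat_re s 2
  have hpi : ‖(Real.pi : ℂ) ^ (-s / 2)‖ ≤ 1 := by
    rw [norm_cpow_eq_rpow_re_of_pos Real.pi_pos, div_ofNat_re, neg_re]
    exact Real.rpow_le_one_of_one_le_of_nonpos (by linarith [Real.two_le_pi]) (by linarith)
  have hmax : Real.Gamma (s / 2).re ≤ max (Real.Gamma (1 / 4)) (Real.Gamma (n + 1)) := by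
    refine Real.convexOn_Gamma.le_max_of_mem_Icc (Set.mem_Ioi.mpr (by norm_num))
      (Set.mem_Ioi.mpr (by positivity)) ?_
    rw [hre]
    constructor <;> linarith
  rw [Real.Gamma_nat_eq_factorial] at hmax
  have hquarter : 0 ≤ Real.Gamma (1 / 4) := (Real.Gamma_pos_of_pos (by norm_num)).le
  calc ‖Gammaℝ s‖ ≤ 1 * Real.Gamma (s / 2).re := by
        rw [Gammaℝ_def, norm_mul]
        gcongr
        exact norm_Gamma_le_Gamma_re (by rw [hre]; linarith)
    _ ≤ Real.Gamma (1 / 4) + n.factorial := by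
        rw [one_mul]
        exact hmax.trans (max_le_add_of_nonneg hquarter (Nat.cast_nonneg _))

variable {q : ℕ} {χ : DirichletCharacter ℂ q}

lemma norm_gammaFactor_le (χ : DirichletCharacter ℂ q) {s : ℂ} {n : ℕ} (hs : 1 / 2 ≤ s.re)
    (hn : s.re ≤ 2 * n + 1) : ‖gammaFactor χ s‖ ≤ Real.Gamma (1 / 4) + n.factorial := by
  rcases χ.even_or_odd with h | h
  · rw [h.gammaFactor_def]
    exact norm_Gammaℝ_le hs (by linarith)
  · rw [h.gammaFactor_def]
    exact norm_Gammaℝ_le (by rw [add_re, one_re]; linarith) (by rw [add_re, one_re]; linarith)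

lemma factorial_le_exp_mul_sqrt {n : ℕ} {x : ℝ} (hx : 0 < x) (hn : n ≤ x) :
    (n.factorial : ℝ) ≤ Real.exp (2 * (x * √x)) := by
  rcases n.eq_zero_or_pos with rfl | hn0
  · simpa using by positivity
  have hlog : Real.log n ≤ 2 * √x := by
    calc Real.log n ≤ Real.log x := Real.log_le_log (by exact_mod_cast hn0) hn
      _ = 2 * Real.log √x := by rw [Real.log_sqrt hx.le]; ring
      _ ≤ 2 * √x := by
        gcongr
        exact Real.log_le_self (Real.sqrt_nonneg x)
  calc (n.factorial : ℝ) ≤ (n : ℝ) ^ n := by exact_mod_cast Nat.factorial_le_pow n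
    _ = Real.exp (Real.log n * n) := by
        rw [← Real.rpow_natCast, Real.rpow_def_of_pos (by exact_mod_cast hn0)]
    _ ≤ Real.exp (2 * √x * x) := by gcongr
    _ = Real.exp (2 * (x * √x)) := by ring_nf

lemma norm_gammaFactor_half_add_le (χ : DirichletCharacter ℂ q) {R : ℝ} (hR : 0 ≤ R) {z : ℂ}
    (hz : z.re ≤ R) (hre : 0 ≤ z.re) :
    ‖gammaFactor χ (1 / 2 + z)‖ ≤ Real.exp (Real.Gamma (1 / 4) * ((R + 3) * √(R + 3))) *
      Real.exp (2 * ((R + 3) * √(R + 3))) := by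
  set K := Real.Gamma (1 / 4)
  set T := (R + 3) * √(R + 3)
  have hK : 0 ≤ K := (Real.Gamma_pos_of_pos (by norm_num)).le
  have hsqrt : 1 ≤ √(R + 3) := by rw [Real.one_le_sqrt]; linarith
  have hRT : R + 3 ≤ T := le_mul_of_one_le_right (by linarith) hsqrt
  have hs : (1 / 2 + z).re = 1 / 2 + z.re := by simp
  have hn := Nat.ceil_lt_add_one hR
  have hfac : (⌈R⌉₊.factorial : ℝ) ≤ Real.exp (2 * T) :=
    factorial_le_exp_mul_sqrt (by linarith) (by linarith)
  have hle := norm_gammaFactor_le χ (n := ⌈R⌉₊) (s := 1 / 2 + z) (by linarith)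
    (by linarith [Nat.le_ceil R])
  have hKT : K + 1 ≤ Real.exp (K * T) :=
    (Real.add_one_le_exp K).trans (Real.exp_le_exp.mpr (by nlinarith))
  nlinarith [Real.one_le_exp (by linarith : 0 ≤ 2 * T)]

-- For `Re z ≥ 0` only the Gamma factor grows faster than `exp (O(‖z‖))`.
lemma norm_centeredLFunction_le_of_re_nonneg [NeZero q] (hχ : χ ≠ 1) {R : ℝ} (hR : 0 ≤ R)
    {z : ℂ} (hz : ‖z‖ ≤ R) (hre : 0 ≤ z.re) :
    ‖centeredLFunction χ z‖ ≤
      Real.exp ((Real.log q + Real.Gamma (1 / 4) + 2 + 2 * q) * ((R + 3) * √(R + 3))) := by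
  set K := Real.Gamma (1 / 4)
  set T := (R + 3) * √(R + 3)
  have hsqrt : 1 ≤ √(R + 3) := by rw [Real.one_le_sqrt]; linarith
  have hRT : R + 3 ≤ T := le_mul_of_one_le_right (by linarith) hsqrt
  have hzR : z.re ≤ R := (re_le_norm z).trans hz
  have hs : (1 / 2 + z).re = 1 / 2 + z.re := by simp
  have hexp : ‖cexp (z * (Real.log q / 2 : ℝ))‖ ≤ Real.exp (Real.log q * T) := by
    rw [Complex.norm_exp, re_mul_ofReal, Real.exp_le_exp]
    nlinarith [Real.log_natCast_nonneg q]
  have hgamma : ‖gammaFactor χ (1 / 2 + z)‖ ≤ Real.exp (K * T) * Real.exp (2 * T) :=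
    norm_gammaFactor_half_add_le χ hR hzR hre
  have hL : ‖LFunction χ (1 / 2 + z)‖ ≤ Real.exp (2 * q * T) := by
    have hnorm : ‖1 / 2 + z‖ ≤ T := by
      refine (norm_add_le _ _).trans ?_
      norm_num
      linarith
    calc ‖LFunction χ (1 / 2 + z)‖ ≤ q * ‖1 / 2 + z‖ / (1 / 2 + z).re :=
          norm_LFunction_le hχ (by linarith)
      _ ≤ q * T / (1 / 2) := by
          gcongr
          linarith
      _ ≤ Real.exp (2 * q * T) := by linarith [Real.add_one_le_exp (2 * q * T)]
  rw [centeredLFunction, norm_mul, completedLFunction_eq_gammaFactor_mul χ (by linarith), norm_mul]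
  calc _ ≤ Real.exp (Real.log q * T) *
        (Real.exp (K * T) * Real.exp (2 * T) * Real.exp (2 * q * T)) := by gcongr
    _ = _ := by
        rw [← Real.exp_add, ← Real.exp_add, ← Real.exp_add]
        ring_nf

lemma norm_centeredLFunction_le [NeZero q] (hχ : χ ≠ 1) (hp : χ.IsPrimitive) {R : ℝ} {z : ℂ}
    (hz : ‖z‖ ≤ R) :
    ‖centeredLFunction χ z‖ ≤
      Real.exp ((Real.log q + Real.Gamma (1 / 4) + 2 + 2 * q) * ((R + 3) * √(R + 3))) := by
  have hR : 0 ≤ R := (norm_nonneg z).trans hz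
  rcases le_total 0 z.re with hre | hre
  · exact norm_centeredLFunction_le_of_re_nonneg hχ hR hz hre
  · rw [← norm_centeredLFunction_neg_conj hχ hp]
    refine norm_centeredLFunction_le_of_re_nonneg hχ hR ?_ ?_
    · rwa [norm_neg, norm_conj]
    · rw [neg_re, conj_re]
      linarith

lemma const_mul_mul_sqrt_isLittleO_sq (A : ℝ) :
    (fun R : ℝ ↦ A * ((R + 3) * √(R + 3))) =o[atTop] fun R ↦ R ^ 2 := by
  have hlin : (fun R : ℝ ↦ R + 3) =O[atTop] fun R ↦ R := by
    refine .of_bound 4 ?_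
    filter_upwards [eventually_ge_atTop 1] with R hR
    rw [Real.norm_of_nonneg (by linarith), Real.norm_of_nonneg (by linarith)]
    linarith
  have hsqrt : (fun R : ℝ ↦ √(R + 3)) =o[atTop] fun R ↦ R := by
    have h : (fun R : ℝ ↦ √R) =o[atTop] fun R ↦ R := by
      have hone : (fun _ ↦ (1 : ℝ)) =o[atTop] fun R : ℝ ↦ √R :=
        (isLittleO_one_left_iff ℝ).mpr (tendsto_norm_atTop_atTop.comp tendsto_sqrt_atTop)
      refine ((isBigO_refl (fun R : ℝ ↦ √R) atTop).mul_isLittleO hone).congr' ?_ ?_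
      · simp only [mul_one, EventuallyEq.rfl]
      · filter_upwards [eventually_ge_atTop 0] with R hR using Real.mul_self_sqrt hR
    exact (h.comp_tendsto (tendsto_atTop_add_const_right _ 3 tendsto_id)).trans_isBigO hlin
  simpa only [pow_two] using (hlin.mul_isLittleO hsqrt).const_mul_left A

end Growth

section LowerBound

open DirichletCharacter Filter Topology ComplexConjugate

lemma differentiableAt_Gammaℝ_of_re_pos {s : ℂ} (hs : 0 < s.re) : DifferentiableAt ℂ Gammaℝ s := by
  simpa [Pi.inv_def] using
    (differentiable_Gammaℝ_inv s).inv (inv_ne_zero (Gammaℝ_ne_zero_of_re_pos hs))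

lemma differentiableAt_gammaFactor_of_re_pos {q : ℕ} (χ : DirichletCharacter ℂ q) {s : ℂ}
    (hs : 0 < s.re) : DifferentiableAt ℂ (gammaFactor χ) s := by
  rcases χ.even_or_odd with h | h
  · rw [funext h.gammaFactor_def]
    exact differentiableAt_Gammaℝ_of_re_pos hs
  · rw [funext h.gammaFactor_def]
    exact DifferentiableAt.comp (g := Gammaℝ) s (differentiableAt_Gammaℝ_of_re_pos
      (by rw [add_re, one_re]; linarith)) (differentiableAt_id.add_const 1)

variable {q : ℕ} [NeZero q] {χ : DirichletCharacter ℂ q}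

lemma LFunction_ne_zero_of_dirichletRH (hRH : dirichletRH χ) (hχ : χ ≠ 1) {s : ℂ}
    (hs : 1 / 2 < s.re) : LFunction χ s ≠ 0 := by
  intro h
  rcases lt_or_ge s.re 1 with hlt | hge
  · exact hs.ne' (hRH s (by linarith) hlt h)
  · exact LFunction_ne_zero_of_one_le_re χ (.inl hχ) hge h

lemma centeredLFunction_ne_zero_of_dirichletRH (hRH : dirichletRH χ) (hχ : χ ≠ 1) {z : ℂ}
    (hz : 0 < z.re) : centeredLFunction χ z ≠ 0 := by
  have hs : 1 / 2 < (1 / 2 + z).re := by simpa using hz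
  rw [centeredLFunction, completedLFunction_eq_gammaFactor_mul χ (by linarith)]
  exact mul_ne_zero (Complex.exp_ne_zero _) (mul_ne_zero
    (gammaFactor_ne_zero_of_re_pos χ (by linarith)) (LFunction_ne_zero_of_dirichletRH hRH hχ hs))

lemma re_eq_zero_of_centeredLFunction_eq_zero (hRH : dirichletRH χ) (hχ : χ ≠ 1)
    (hp : χ.IsPrimitive) {z : ℂ} (hz : centeredLFunction χ z = 0) : z.re = 0 := by
  refine le_antisymm (not_lt.mp fun h ↦ centeredLFunction_ne_zero_of_dirichletRH hRH hχ h hz)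
    (not_lt.mp fun h ↦ ?_)
  refine centeredLFunction_ne_zero_of_dirichletRH hRH hχ (z := -conj z) (by simpa) ?_
  rw [← norm_eq_zero, norm_centeredLFunction_neg_conj hχ hp, hz, norm_zero]

lemma re_logDeriv_centeredLFunction_nonneg (hRH : dirichletRH χ) (hχ : χ ≠ 1)
    (hp : χ.IsPrimitive) {z : ℂ} (hz : 0 < z.re) : 0 ≤ (logDeriv (centeredLFunction χ) z).re :=
  re_logDeriv_nonneg_of_imaginary_zeros (differentiable_centeredLFunction hχ)
    (norm_centeredLFunction_neg_conj hχ hp)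
    (fun _ ↦ re_eq_zero_of_centeredLFunction_eq_zero hRH hχ hp)
    (const_mul_mul_sqrt_isLittleO_sq _)
    (.of_forall fun _ _ ↦ norm_centeredLFunction_le hχ hp) hz

lemma logDeriv_centeredLFunction (hRH : dirichletRH χ) (hχ : χ ≠ 1) {s : ℂ}
    (hs : 1 / 2 < s.re) :
    logDeriv (centeredLFunction χ) (s - 1 / 2) =
      (Real.log q / 2 : ℝ) + (logDeriv (gammaFactor χ) s + logDeriv (LFunction χ) s) := by
  have hs0 : 0 < s.re := by linarith
  have hg0 := gammaFactor_ne_zero_of_re_pos χ hs0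
  have hL0 := LFunction_ne_zero_of_dirichletRH hRH hχ hs
  have heq : centeredLFunction χ =ᶠ[𝓝 (s - 1 / 2)] fun z ↦ cexp (z * (Real.log q / 2 : ℝ)) *
      (gammaFactor χ (1 / 2 + z) * LFunction χ (1 / 2 + z)) := by
    have hnhds : {z : ℂ | 0 < z.re} ∈ 𝓝 (s - 1 / 2) :=
      (isOpen_lt continuous_const continuous_re).mem_nhds (by simpa using hs)
    filter_upwards [hnhds] with z (hz : 0 < z.re)
    rw [centeredLFunction, completedLFunction_eq_gammaFactor_mul χ (by simpa using by linarith)]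
  have hadd : 1 / 2 + (s - 1 / 2) = s := by ring
  have hshift : HasDerivAt (fun z : ℂ ↦ 1 / 2 + z) 1 (s - 1 / 2) := (hasDerivAt_id _).const_add _
  have hexp : HasDerivAt (fun z : ℂ ↦ cexp (z * (Real.log q / 2 : ℝ)))
      (cexp ((s - 1 / 2) * (Real.log q / 2 : ℝ)) * (1 * (Real.log q / 2 : ℝ))) (s - 1 / 2) :=
    ((hasDerivAt_id _).mul_const _).cexp
  have hgamma : HasDerivAt (fun z ↦ gammaFactor χ (1 / 2 + z)) (deriv (gammaFactor χ) s * 1)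
      (s - 1 / 2) :=
    HasDerivAt.comp (h₂ := gammaFactor χ) _
      (by rw [hadd]; exact (differentiableAt_gammaFactor_of_re_pos χ hs0).hasDerivAt) hshift
  have hL : HasDerivAt (fun z ↦ LFunction χ (1 / 2 + z)) (deriv (LFunction χ) s * 1)
      (s - 1 / 2) :=
    HasDerivAt.comp (h₂ := LFunction χ) _
      (by rw [hadd]; exact (differentiable_LFunction hχ s).hasDerivAt) hshift
  rw [logDeriv_apply, heq.deriv_eq, heq.eq_of_nhds, (hexp.fun_mul (hgamma.fun_mul hL)).deriv,
    hadd, logDeriv_apply, logDeriv_apply]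
  field_simp

lemma exists_re_logDeriv_gammaFactor_le :
    ∃ C : ℝ, 0 ≤ C ∧ ∀ (q : ℕ) (χ : DirichletCharacter ℂ q) (s : ℂ), 1 / 2 ≤ s.re →
      (logDeriv (gammaFactor χ) s).re ≤ Real.log ‖s + 1‖ / 2 + C := by
  obtain ⟨C, hC0, hC⟩ := exists_re_logDeriv_Gammaℝ_le one_half_pos
  refine ⟨C, hC0, fun q χ s hs ↦ ?_⟩
  rcases χ.even_or_odd with h | h
  · rw [funext h.gammaFactor_def]
    have hnorm : ‖s‖ ≤ ‖s + 1‖ := by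
      rw [← sq_le_sq₀ (norm_nonneg _) (norm_nonneg _), Complex.sq_norm, Complex.sq_norm,
        normSq_apply, normSq_apply, add_re, add_im, one_re, one_im]
      nlinarith
    have hpos : 0 < ‖s‖ := (by linarith : 0 < s.re).trans_le (re_le_norm s)
    linarith [hC s hs, Real.log_le_log hpos hnorm]
  · have hcomp : logDeriv (gammaFactor χ) s = logDeriv Gammaℝ (s + 1) := by
      rw [funext h.gammaFactor_def, logDeriv_apply, logDeriv_apply, deriv_comp_add_const]
    rw [hcomp]
    exact hC (s + 1) (by rw [add_re, one_re]; linarith)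

theorem exists_re_logDeriv_LFunction_nonneg :
    ∃ C : ℝ, 0 ≤ C ∧ ∀ (q : ℕ) [NeZero q] (χ : DirichletCharacter ℂ q), χ ≠ 1 →
      χ.IsPrimitive → dirichletRH χ → ∀ s : ℂ, 1 / 2 < s.re →
      0 ≤ (logDeriv (LFunction χ) s).re + Real.log q / 2 + Real.log ‖s + 1‖ / 2 + C := by
  obtain ⟨C, hC0, hC⟩ := exists_re_logDeriv_gammaFactor_le
  refine ⟨C, hC0, fun q _ χ hχ hp hRH s hs ↦ ?_⟩
  have hpos := re_logDeriv_centeredLFunction_nonneg hRH hχ hp (z := s - 1 / 2) (by simpa using hs)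
  rw [logDeriv_centeredLFunction hRH hχ hs, add_re, add_re, ofReal_re] at hpos
  linarith [hC q χ s hs.le]

end LowerBound

section VerticalIntegrals

open MeasureTheory Filter Topology Asymptotics

/-- `f` grows at most like `(1 + ‖s‖) ^ r` on `A`, the condition under which vertical lines of
integration are moved inside `A`; decay is the case `r < 0`. -/
abbrev HasGrowthOn (f : ℂ → ℂ) (r : ℝ) (A : Set ℂ) : Prop :=
  f =O[𝓟 A] fun s ↦ (1 + ‖s‖) ^ r

/-- The integral `∫ f(a + iv) dv` along the line `Re s = a`, with the factor `i` of
`ds = i dv` left out. -/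
noncomputable def verticalIntegral (f : ℂ → ℂ) (a : ℝ) : ℂ :=
  ∫ v : ℝ, f (a + v * I)

lemma verticalIntegral_congr {f g : ℂ → ℂ} {a : ℝ} (h : ∀ s : ℂ, s.re = a → f s = g s) :
    verticalIntegral f a = verticalIntegral g a :=
  integral_congr_ae (.of_forall fun v ↦ h _ (by simp))

lemma verticalIntegral_add {f g : ℂ → ℂ} {a : ℝ} (hf : VerticalIntegrable f a)
    (hg : VerticalIntegrable g a) :
    verticalIntegral (fun s ↦ f s + g s) a = verticalIntegral f a + verticalIntegral g a :=
  integral_add hf hg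

lemma verticalIntegral_sub {f g : ℂ → ℂ} {a : ℝ} (hf : VerticalIntegrable f a)
    (hg : VerticalIntegrable g a) :
    verticalIntegral (fun s ↦ f s - g s) a = verticalIntegral f a - verticalIntegral g a :=
  integral_sub hf hg

lemma verticalIntegral_const_mul (w : ℂ) (f : ℂ → ℂ) (a : ℝ) :
    verticalIntegral (fun s ↦ w * f s) a = w * verticalIntegral f a :=
  integral_const_mul w _

lemma verticalIntegral_comp_sub_left (f : ℂ → ℂ) (a : ℝ) (w : ℂ) :
    verticalIntegral (fun s ↦ f (w - s)) a = verticalIntegral f (w.re - a) := by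
  rw [verticalIntegral, verticalIntegral,
    ← integral_sub_left_eq_self (fun v : ℝ ↦ f ((w.re - a : ℝ) + v * I)) volume w.im]
  refine integral_congr_ae (.of_forall fun v ↦ congr_arg f (Complex.ext ?_ ?_)) <;> simp

lemma HasGrowthOn.mono {f : ℂ → ℂ} {r : ℝ} {A A' : Set ℂ} (hf : HasGrowthOn f r A)
    (hA : A' ⊆ A) : HasGrowthOn f r A' :=
  IsBigO.mono hf (principal_mono.mpr hA)

lemma HasGrowthOn.mono_exponent {f : ℂ → ℂ} {r r' : ℝ} {A : Set ℂ} (hf : HasGrowthOn f r A)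
    (hr : r ≤ r') : HasGrowthOn f r' A := by
  refine hf.trans (.of_bound 1 (.of_forall fun s ↦ ?_))
  have h1 : 1 ≤ 1 + ‖s‖ := le_add_of_nonneg_right (norm_nonneg s)
  rw [one_mul, Real.norm_of_nonneg (by positivity), Real.norm_of_nonneg (by positivity)]
  exact Real.rpow_le_rpow_of_exponent_le h1 hr

lemma HasGrowthOn.mul {f g : ℂ → ℂ} {r r' : ℝ} {A : Set ℂ} (hf : HasGrowthOn f r A)
    (hg : HasGrowthOn g r' A) : HasGrowthOn (fun s ↦ f s * g s) (r + r') A :=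
  (IsBigO.mul hf hg).congr_right fun s ↦ (Real.rpow_add (by positivity) r r').symm

lemma HasGrowthOn.of_norm_le {f : ℂ → ℂ} {A : Set ℂ} {M : ℝ} (hM : ∀ s ∈ A, ‖f s‖ ≤ M) :
    HasGrowthOn f 0 A :=
  isBigO_principal.mpr ⟨M, fun s hs ↦ by simpa using hM s hs⟩

lemma HasGrowthOn.const (w : ℂ) (A : Set ℂ) : HasGrowthOn (fun _ ↦ w) 0 A :=
  .of_norm_le fun _ _ ↦ le_rfl

lemma hasGrowthOn_inv_sub {A : Set ℂ} {p : ℂ} {δ : ℝ} (hδ : 0 < δ) (hA : ∀ s ∈ A, δ ≤ ‖s - p‖) :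
    HasGrowthOn (fun s ↦ (s - p)⁻¹) (-1) A := by
  refine isBigO_principal.mpr ⟨(1 + ‖p‖) / δ + 1, fun s hs ↦ ?_⟩
  have hsp : 0 < ‖s - p‖ := hδ.trans_le (hA s hs)
  rw [Real.rpow_neg_one, norm_inv, norm_inv, Real.norm_of_nonneg (by positivity),
    ← div_eq_mul_inv, inv_eq_one_div, div_le_div_iff₀ hsp (by positivity), one_mul]
  calc 1 + ‖s‖ ≤ 1 + ‖p‖ + ‖s - p‖ := by linarith [norm_le_norm_add_norm_sub' s p]
    _ = (1 + ‖p‖) / δ * δ + ‖s - p‖ := by rw [div_mul_cancel₀ _ hδ.ne']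
    _ ≤ (1 + ‖p‖) / δ * ‖s - p‖ + ‖s - p‖ := by gcongr; exact hA s hs
    _ = ((1 + ‖p‖) / δ + 1) * ‖s - p‖ := by ring

lemma hasGrowthOn_inv_sub_of_re_lt {A : Set ℂ} {b : ℝ} {p : ℂ} (hp : p.re < b)
    (hA : A ⊆ re ⁻¹' Set.Ici b) : HasGrowthOn (fun s ↦ (s - p)⁻¹) (-1) A :=
  hasGrowthOn_inv_sub (sub_pos.mpr hp) fun s hs ↦
    (by simpa using hA hs : b - p.re ≤ (s - p).re).trans (re_le_norm _)

lemma hasGrowthOn_inv_sub_of_ne {a : ℝ} {p : ℂ} (hp : a ≠ p.re) :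
    HasGrowthOn (fun s ↦ (s - p)⁻¹) (-1) (re ⁻¹' {a}) :=
  hasGrowthOn_inv_sub (abs_pos.mpr (sub_ne_zero.mpr hp)) fun s hs ↦ by
    rw [← Set.mem_singleton_iff.mp (Set.mem_preimage.mp hs), ← sub_re]
    exact abs_re_le_norm _

lemma hasGrowthOn_of_isCompact {f : ℂ → ℂ} {A : Set ℂ} (r : ℝ) (hA : IsCompact A)
    (hf : ContinuousOn f A) : HasGrowthOn f r A := by
  have hne (s : ℂ) : 1 + ‖s‖ ≠ 0 := by positivity
  have hcont : Continuous fun s : ℂ ↦ (1 + ‖s‖) ^ r :=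
    Continuous.rpow_const (by fun_prop) fun s ↦ .inl (hne s)
  exact (hf.isBigO_principal hA (c := (1 : ℝ)) (by simp)).trans
    (hcont.continuousOn.isBigO_rev_principal hA (fun s _ ↦ by positivity) 1)

lemma hasGrowthOn_dslope {f : ℂ → ℂ} {r : ℝ} {A : Set ℂ} {S : ℂ} (hA : IsClosed A)
    (hc : ContinuousOn (dslope f S) A) (hf : HasGrowthOn (fun s ↦ f s - f S) r A) :
    HasGrowthOn (dslope f S) (r - 1) A := by
  have hnear : HasGrowthOn (dslope f S) (r - 1) (A ∩ Metric.closedBall S 1) :=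
    hasGrowthOn_of_isCompact _ ((isCompact_closedBall S 1).inter_left hA)
      (hc.mono Set.inter_subset_left)
  have hfar : HasGrowthOn (dslope f S) (r - 1) (A ∩ {s | 1 ≤ ‖s - S‖}) := by
    have hmul := (hf.mono Set.inter_subset_left).mul
      (hasGrowthOn_inv_sub (A := A ∩ {s | 1 ≤ ‖s - S‖}) one_pos fun s hs ↦ hs.2)
    refine hmul.congr' (eventually_principal.mpr fun s hs ↦ ?_) (by rfl)
    have hne : s ≠ S := sub_ne_zero.mp (norm_pos_iff.mp (zero_lt_one.trans_le hs.2))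
    rw [dslope_of_ne _ hne, slope_def_field, div_eq_mul_inv]
  refine (hnear.sup hfar).mono ?_
  rw [sup_principal, ← Set.inter_union_distrib_left]
  exact principal_mono.mpr fun s hs ↦ ⟨hs, by simpa [Complex.dist_eq] using le_total ‖s - S‖ 1⟩

lemma one_add_norm_rpow_le {r : ℝ} (hr : r ≤ 0) (s : ℂ) :
    (1 + ‖s‖) ^ r ≤ (1 + |s.im|) ^ r :=
  Real.rpow_le_rpow_of_nonpos (by positivity) (by linarith [abs_im_le_norm s]) hr

lemma HasGrowthOn.exists_norm_le {f : ℂ → ℂ} {r : ℝ} {A : Set ℂ} (hr : r ≤ 0)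
    (hf : HasGrowthOn f r A) : ∃ K, 0 ≤ K ∧ ∀ s ∈ A, ‖f s‖ ≤ K * (1 + |s.im|) ^ r := by
  obtain ⟨K, hK0, hK⟩ := hf.exists_nonneg
  refine ⟨K, hK0, fun s hs ↦ (isBigOWith_principal.mp hK s hs).trans ?_⟩
  rw [Real.norm_of_nonneg (by positivity)]
  exact mul_le_mul_of_nonneg_left (one_add_norm_rpow_le hr s) hK0

lemma integrable_one_add_abs_rpow {r : ℝ} (hr : r < -1) :
    Integrable fun v : ℝ ↦ (1 + |v|) ^ r := by
  simpa using integrable_one_add_norm (E := ℝ) (μ := volume) (r := -r) (by simp; linarith)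

lemma HasGrowthOn.verticalIntegrable {f : ℂ → ℂ} {r a : ℝ} (hr : r < -1)
    (hf : HasGrowthOn f r (re ⁻¹' {a})) (hc : ContinuousOn f (re ⁻¹' {a})) :
    VerticalIntegrable f a := by
  obtain ⟨K, -, hK⟩ := hf.exists_norm_le (by linarith)
  have hcont : Continuous fun v : ℝ ↦ f (a + v * I) :=
    hc.comp_continuous (by fun_prop) fun v ↦ by simp
  refine ((integrable_one_add_abs_rpow hr).const_mul K).mono' hcont.aestronglyMeasurable
    (.of_forall fun v ↦ ?_)
  simpa using hK (a + v * I) (by simp)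

lemma tendsto_integral_horizontal {f : ℂ → ℂ} {r b c : ℝ} (hr : r < 0) (hbc : b ≤ c)
    (hf : HasGrowthOn f r (re ⁻¹' Set.Icc b c)) {l : Filter ℝ} {u : ℝ → ℝ}
    (hu : Tendsto (fun T ↦ |u T|) l atTop) :
    Tendsto (fun T ↦ ∫ y in b..c, f (y + u T * I)) l (𝓝 0) := by
  obtain ⟨K, -, hK⟩ := hf.exists_norm_le hr.le
  have hlim : Tendsto (fun T ↦ K * (1 + |u T|) ^ r * |c - b|) l (𝓝 0) := by
    have h : Tendsto (fun T ↦ (1 + |u T|) ^ r) l (𝓝 0) := by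
      simpa [Function.comp_def] using (tendsto_rpow_neg_atTop (neg_pos.mpr hr)).comp
        (tendsto_atTop_add_const_left _ 1 hu)
    simpa using (h.const_mul K).mul_const |c - b|
  refine squeeze_zero_norm (fun T ↦ ?_) hlim
  refine intervalIntegral.norm_integral_le_of_norm_le_const fun y hy ↦ ?_
  rw [Set.uIoc_of_le hbc] at hy
  simpa using hK (y + u T * I) (by simpa using ⟨hy.1.le, hy.2⟩)

theorem verticalIntegral_eq_of_hasGrowthOn {f : ℂ → ℂ} {r b c : ℝ} (hr : r < -1) (hbc : b ≤ c)
    (hd : DifferentiableOn ℂ f (re ⁻¹' Set.Icc b c))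
    (hf : HasGrowthOn f r (re ⁻¹' Set.Icc b c)) :
    verticalIntegral f b = verticalIntegral f c := by
  have hline {a : ℝ} (ha : a ∈ Set.Icc b c) :
      Tendsto (fun T ↦ ∫ v in -T..T, f (a + v * I)) atTop (𝓝 (verticalIntegral f a)) := by
    have hsub : re ⁻¹' {a} ⊆ re ⁻¹' Set.Icc b c :=
      Set.preimage_mono (Set.singleton_subset_iff.mpr ha)
    exact intervalIntegral_tendsto_integral ((hf.mono hsub).verticalIntegrable
      hr (hd.continuousOn.mono hsub)) tendsto_neg_atTop_atBot tendsto_id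
  have hrect (T : ℝ) : I * ((∫ v in -T..T, f (c + v * I)) - ∫ v in -T..T, f (b + v * I)) =
      (∫ y in b..c, f (y + T * I)) - ∫ y in b..c, f (y + (-T : ℝ) * I) := by
    have h := Complex.integral_boundary_rect_eq_zero_of_differentiableOn f (b + (-T : ℝ) * I)
      (c + T * I) (hd.mono fun s hs ↦ by simpa [Set.uIcc_of_le hbc] using hs.1)
    simp only [add_re, ofReal_re, mul_re, I_re, mul_zero, ofReal_im, I_im, mul_one, sub_self,
      add_zero, add_im, mul_im, zero_add, smul_eq_mul] at h
    linear_combination h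
  have htop := tendsto_integral_horizontal (by linarith) hbc hf (u := fun T ↦ T)
    tendsto_abs_atTop_atTop
  have hbot := tendsto_integral_horizontal (by linarith) hbc hf (u := fun T ↦ -T)
    (by simpa using tendsto_abs_atTop_atTop)
  have hlim : Tendsto
      (fun T ↦ I * ((∫ v in -T..T, f (c + v * I)) - ∫ v in -T..T, f (b + v * I))) atTop (𝓝 0) := by
    simpa only [hrect, _root_.sub_zero] using htop.sub hbot
  have huniq := tendsto_nhds_unique hlim
    (((hline ⟨hbc, le_rfl⟩).sub (hline ⟨le_rfl, hbc⟩)).const_mul I)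
  exact (sub_eq_zero.mp ((mul_eq_zero.mp huniq.symm).resolve_left I_ne_zero)).symm

lemma tendsto_atTop_zero_of_hasGrowthOn {f : ℂ → ℂ} {r b : ℝ} (hr : r < 0)
    (hf : HasGrowthOn f r (re ⁻¹' Set.Ici b)) (v : ℝ) :
    Tendsto (fun c : ℝ ↦ f (c + v * I)) atTop (𝓝 0) := by
  obtain ⟨K, -, hK⟩ := hf.exists_nonneg
  have hnorm : Tendsto (fun c : ℝ ↦ 1 + ‖(c + v * I : ℂ)‖) atTop atTop :=
    tendsto_atTop_add_const_left _ 1 (tendsto_atTop_mono (fun c ↦ by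
      simpa using re_le_norm (c + v * I)) tendsto_id)
  have hzero := ((tendsto_rpow_neg_atTop (y := -r) (by linarith)).comp hnorm).const_mul K
  refine squeeze_zero_norm' ?_ (by simpa using hzero)
  filter_upwards [eventually_ge_atTop b] with c hc
  simpa [abs_of_nonneg (Real.rpow_nonneg (by positivity : 0 ≤ 1 + ‖(c + v * I : ℂ)‖) r)]
    using isBigOWith_principal.mp hK (c + v * I) (by simpa using hc)

lemma tendsto_verticalIntegral_atTop_zero {f : ℂ → ℂ} {r b : ℝ} (hr : r < -1)
    (hc : ContinuousOn f (re ⁻¹' Set.Ici b)) (hf : HasGrowthOn f r (re ⁻¹' Set.Ici b)) :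
    Tendsto (verticalIntegral f) atTop (𝓝 0) := by
  obtain ⟨K, -, hK⟩ := hf.exists_norm_le (by linarith)
  rw [← integral_zero ℝ ℂ]
  refine tendsto_integral_filter_of_dominated_convergence (fun v ↦ K * (1 + |v|) ^ r) ?_ ?_
    ((integrable_one_add_abs_rpow hr).const_mul K)
    (.of_forall (tendsto_atTop_zero_of_hasGrowthOn (by linarith) hf))
  · filter_upwards [eventually_ge_atTop b] with c hbc
    exact (hc.comp_continuous (by fun_prop) fun v ↦ by simpa using hbc).aestronglyMeasurable
  · filter_upwards [eventually_ge_atTop b] with c hbc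
    exact .of_forall fun v ↦ by simpa using hK (c + v * I) (by simpa using hbc)

theorem verticalIntegral_eq_zero_of_hasGrowthOn {f : ℂ → ℂ} {r b : ℝ} (hr : r < -1)
    (hd : DifferentiableOn ℂ f (re ⁻¹' Set.Ici b)) (hf : HasGrowthOn f r (re ⁻¹' Set.Ici b)) :
    verticalIntegral f b = 0 := by
  have hshift : ∀ᶠ c in atTop, verticalIntegral f b = verticalIntegral f c := by
    filter_upwards [eventually_ge_atTop b] with c hc
    have hsub : re ⁻¹' Set.Icc b c ⊆ re ⁻¹' Set.Ici b := Set.preimage_mono Set.Icc_subset_Ici_self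
    exact verticalIntegral_eq_of_hasGrowthOn hr hc (hd.mono hsub) (hf.mono hsub)
  exact tendsto_nhds_unique (tendsto_const_nhds.congr' hshift)
    (tendsto_verticalIntegral_atTop_zero hr hd.continuousOn hf)

end VerticalIntegrals

section PerronKernel

open MeasureTheory Filter Asymptotics
open scoped ComplexConjugate

/-- The kernel `y ^ (s - S) / (s - S) ^ 2` of the Perron formula which weights the `n`-th
coefficient of a Dirichlet series by `log (x / n)`. -/
noncomputable def perronKernel (y : ℝ) (S s : ℂ) : ℂ :=
  (y : ℂ) ^ (s - S) * ((s - S)⁻¹ * (s - S)⁻¹)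

variable {y b c : ℝ} {s S : ℂ}

lemma norm_perronKernel (hy : 0 < y) (S s : ℂ) :
    ‖perronKernel y S s‖ = y ^ (s.re - S.re) * (‖s - S‖ ^ 2)⁻¹ := by
  rw [perronKernel, norm_mul, norm_cpow_eq_rpow_re_of_pos hy, sub_re, norm_mul, norm_inv, sq,
    mul_inv]

lemma perronKernel_inv_reflect (hy : 0 < y) (w S s : ℂ) :
    perronKernel y⁻¹ (w - S) (w - s) = perronKernel y S s := by
  have harg : (y : ℂ).arg ≠ π := by rw [arg_ofReal_of_nonneg hy.le]; exact Real.pi_pos.ne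
  have hsub : w - s - (w - S) = -(s - S) := by ring
  rw [perronKernel, perronKernel, hsub, ofReal_inv, inv_cpow _ _ harg, cpow_neg, inv_inv, inv_neg,
    neg_mul_neg]

lemma conj_perronKernel (hy : 0 < y) (hs : s.re = b) (S : ℂ) :
    conj (perronKernel y S s) = perronKernel y⁻¹ (2 * b - conj S) s := by
  have harg : (y : ℂ).arg ≠ π := by rw [arg_ofReal_of_nonneg hy.le]; exact Real.pi_pos.ne
  have hreflect : s = 2 * b - conj s := by
    rw [eq_sub_iff_add_eq, add_conj, hs]
    push_cast
    rfl
  calc conj (perronKernel y S s) = perronKernel y (conj S) (conj s) := by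
        rw [perronKernel, perronKernel, _root_.map_mul, _root_.map_mul, map_inv₀, ← map_sub,
          cpow_conj _ _ harg, conj_ofReal]
    _ = perronKernel y⁻¹ (2 * b - conj S) (2 * b - conj s) :=
        (perronKernel_inv_reflect hy _ _ _).symm
    _ = perronKernel y⁻¹ (2 * b - conj S) s := by rw [← hreflect]

lemma differentiableAt_perronKernel (hy : 0 < y) (hs : s ≠ S) :
    DifferentiableAt ℂ (perronKernel y S) s := by
  have hinv : DifferentiableAt ℂ (fun s ↦ (s - S)⁻¹) s :=
    DifferentiableAt.fun_inv (by fun_prop) (sub_ne_zero.mpr hs)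
  exact (DifferentiableAt.const_cpow (by fun_prop) (.inl (ofReal_ne_zero.mpr hy.ne'))).fun_mul
    (hinv.fun_mul hinv)

lemma hasGrowthOn_perronKernel {A : Set ℂ} {M : ℝ} (hy : 0 < y)
    (hA : HasGrowthOn (fun s ↦ (s - S)⁻¹) (-1) A) (hM : ∀ s ∈ A, y ^ (s.re - S.re) ≤ M) :
    HasGrowthOn (perronKernel y S) (-2) A := by
  have hpow : HasGrowthOn (fun s ↦ (y : ℂ) ^ (s - S)) 0 A := .of_norm_le fun s hs ↦ by
    rw [norm_cpow_eq_rpow_re_of_pos hy, sub_re]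
    exact hM s hs
  exact (hpow.mul (hA.mul hA)).mono_exponent (by norm_num)

lemma verticalIntegrable_mul_perronKernel {f : ℂ → ℂ} {r : ℝ} (hr : r < 1) (hy : 0 < y)
    (hb : b ≠ S.re) (hc : ContinuousOn f (re ⁻¹' {b})) (hf : HasGrowthOn f r (re ⁻¹' {b})) :
    VerticalIntegrable (fun s ↦ f s * perronKernel y S s) b := by
  have hK : HasGrowthOn (perronKernel y S) (-2) (re ⁻¹' {b}) :=
    hasGrowthOn_perronKernel hy (hasGrowthOn_inv_sub_of_ne hb) fun s (hs : s.re = b) ↦ by rw [hs]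
  refine (hf.mul hK).verticalIntegrable (by linarith) (hc.mul fun s (hs : s.re = b) ↦ ?_)
  refine (differentiableAt_perronKernel hy ?_).continuousAt.continuousWithinAt
  rintro rfl
  exact hb hs.symm

lemma verticalIntegrable_perronKernel (hy : 0 < y) (hb : b ≠ S.re) :
    VerticalIntegrable (perronKernel y S) b := by
  simpa using verticalIntegrable_mul_perronKernel zero_lt_one hy hb
    (continuousOn_const (c := (1 : ℂ))) (HasGrowthOn.const 1 _)

lemma verticalIntegral_mul_perronKernel_eq_zero {f : ℂ → ℂ} {r : ℝ} (hr : r < 1) (hy0 : 0 < y)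
    (hy1 : y ≤ 1) (hb : S.re < b) (hd : DifferentiableOn ℂ f (re ⁻¹' Set.Ici b))
    (hf : HasGrowthOn f r (re ⁻¹' Set.Ici b)) :
    verticalIntegral (fun s ↦ f s * perronKernel y S s) b = 0 := by
  have hK : HasGrowthOn (perronKernel y S) (-2) (re ⁻¹' Set.Ici b) :=
    hasGrowthOn_perronKernel hy0 (hasGrowthOn_inv_sub_of_re_lt hb subset_rfl)
      fun s (hs : b ≤ s.re) ↦ Real.rpow_le_one hy0.le hy1 (by linarith)
  refine verticalIntegral_eq_zero_of_hasGrowthOn (by linarith)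
    (hd.fun_mul fun s (hs : b ≤ s.re) ↦ ?_) (hf.mul hK)
  refine (differentiableAt_perronKernel hy0 ?_).differentiableWithinAt
  rintro rfl
  exact hs.not_gt hb

lemma verticalIntegral_perronKernel_of_le_one (hy0 : 0 < y) (hy1 : y ≤ 1) (hc : S.re < c) :
    verticalIntegral (perronKernel y S) c = 0 := by
  simpa using verticalIntegral_mul_perronKernel_eq_zero zero_lt_one hy0 hy1 hc
    (differentiableOn_const (1 : ℂ)) (HasGrowthOn.const 1 _)

lemma verticalIntegral_perronKernel_of_one_le (hy : 1 ≤ y) (hb : b < S.re) :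
    verticalIntegral (perronKernel y S) b = 0 := by
  have hy0 : 0 < y := zero_lt_one.trans_le hy
  have hright := verticalIntegral_perronKernel_of_le_one (c := (2 * S).re - b) (S := 2 * S - S)
    (inv_pos.mpr hy0) (inv_le_one_of_one_le₀ hy)
    (by simp only [sub_re, mul_re, re_ofNat, im_ofNat, zero_mul]; linarith)
  rw [← hright, ← verticalIntegral_comp_sub_left]
  exact verticalIntegral_congr fun s _ ↦ (perronKernel_inv_reflect hy0 _ _ _).symm

end PerronKernel

section Residues

open MeasureTheory Filter Topology Asymptotics
open scoped ComplexConjugate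

variable {b c r : ℝ} {s S : ℂ}

lemma integral_univ_inv_sq_add_sub_sq {d : ℝ} (hd : 0 < d) (t : ℝ) :
    ∫ v : ℝ, (d ^ 2 + (v - t) ^ 2)⁻¹ = π / d := by
  have hscale (v : ℝ) : (d ^ 2 + v ^ 2)⁻¹ = (d ^ 2)⁻¹ * (1 + (d⁻¹ * v) ^ 2)⁻¹ := by
    rw [← mul_inv]
    congr 1
    field_simp
  rw [integral_sub_right_eq_self (fun v : ℝ ↦ (d ^ 2 + v ^ 2)⁻¹) t]
  simp_rw [hscale]
  rw [integral_const_mul, Measure.integral_comp_mul_left (fun v : ℝ ↦ (1 + v ^ 2)⁻¹),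
    integral_univ_inv_one_add_sq, inv_inv, abs_of_pos hd, smul_eq_mul]
  field_simp

lemma integral_inv_norm_sub_sq (hb : b < S.re) :
    ∫ v : ℝ, (‖(b + v * I : ℂ) - S‖ ^ 2)⁻¹ = π / (S.re - b) := by
  rw [← integral_univ_inv_sq_add_sub_sq (sub_pos.mpr hb) S.im]
  refine integral_congr_ae (.of_forall fun v ↦ ?_)
  have hnorm : ‖(b + v * I : ℂ) - S‖ ^ 2 = (S.re - b) ^ 2 + (v - S.im) ^ 2 := by
    rw [Complex.sq_norm, normSq_apply]
    simp only [sub_re, add_re, ofReal_re, mul_re, I_re, mul_zero, ofReal_im, I_im, mul_one,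
      sub_self, add_zero, sub_im, add_im, mul_im, zero_add]
    ring
  simp only [hnorm]

-- The point `2 * b - conj S` is the mirror image of `S` in the line `Re s = b`.
lemma inv_sub_mul_inv_sub_reflection (hs : s.re = b) (S : ℂ) :
    (s - (2 * b - conj S))⁻¹ * (s - S)⁻¹ = -((‖s - S‖ ^ 2)⁻¹ : ℝ) := by
  have hreflect : s - (2 * b - conj S) = -conj (s - S) := by
    have hadd := add_conj s
    rw [hs] at hadd
    rw [map_sub]
    push_cast at hadd
    linear_combination hadd
  rw [hreflect, ← mul_inv, neg_mul, conj_mul', inv_neg, ofReal_inv, ofReal_pow]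

lemma verticalIntegral_inv_sub_mul_inv_sub_reflection (hb : b < S.re) :
    verticalIntegral (fun s ↦ (s - (2 * b - conj S))⁻¹ * (s - S)⁻¹) b = -(π / (S.re - b)) := by
  rw [verticalIntegral_congr fun s hs ↦ inv_sub_mul_inv_sub_reflection hs S, verticalIntegral,
    integral_neg, integral_complex_ofReal, integral_inv_norm_sub_sq hb]
  push_cast
  rfl

lemma reflection_re_lt (hb : b < S.re) : (2 * b - conj S : ℂ).re < b := by
  simp only [sub_re, mul_re, re_ofNat, im_ofNat, ofReal_re, ofReal_im, conj_re]
  linarith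

lemma differentiableOn_inv_sub_of_re_lt {A : Set ℂ} (hS : S.re < b) (hA : A ⊆ re ⁻¹' Set.Ici b) :
    DifferentiableOn ℂ (fun s ↦ (s - S)⁻¹) A :=
  DifferentiableOn.fun_inv (by fun_prop) fun s hs ↦ sub_ne_zero.mpr fun h ↦
    (h ▸ hA hs : b ≤ S.re).not_gt hS

lemma verticalIntegrable_mul_inv_sub {f : ℂ → ℂ} (hr : r < 0) (hb : b ≠ S.re)
    (hc : ContinuousOn f (re ⁻¹' {b})) (hf : HasGrowthOn f r (re ⁻¹' {b})) :
    VerticalIntegrable (fun s ↦ f s * (s - S)⁻¹) b := by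
  refine (hf.mul (hasGrowthOn_inv_sub_of_ne hb)).verticalIntegrable (by linarith)
    (hc.mul (ContinuousOn.inv₀ (by fun_prop) fun s (hs : s.re = b) ↦ sub_ne_zero.mpr ?_))
  rintro rfl
  exact hb hs.symm

lemma verticalIntegral_inv_sub_mul_inv_sub {p : ℂ} (hp : p.re < c) (hS : S.re < c) :
    verticalIntegral (fun s ↦ (s - p)⁻¹ * (s - S)⁻¹) c = 0 :=
  verticalIntegral_eq_zero_of_hasGrowthOn (by norm_num)
    ((differentiableOn_inv_sub_of_re_lt hp subset_rfl).fun_mul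
      (differentiableOn_inv_sub_of_re_lt hS subset_rfl))
    ((hasGrowthOn_inv_sub_of_re_lt hp subset_rfl).mul (hasGrowthOn_inv_sub_of_re_lt hS subset_rfl))

lemma verticalIntegral_dslope_eq {u : ℂ → ℂ} (hr : r < 0) (hb : b < S.re) (hc : S.re < c)
    (hd : DifferentiableOn ℂ u (re ⁻¹' Set.Icc b c))
    (hu : HasGrowthOn u r (re ⁻¹' Set.Icc b c)) (huS : u S = 0) :
    verticalIntegral (fun s ↦ u s * (s - S)⁻¹) b =
      verticalIntegral (fun s ↦ u s * (s - S)⁻¹) c := by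
  have hdslope {a : ℝ} (ha : a ≠ S.re) :
      verticalIntegral (fun s ↦ u s * (s - S)⁻¹) a = verticalIntegral (dslope u S) a := by
    refine verticalIntegral_congr fun s hs ↦ ?_
    rw [dslope_of_ne _ fun h ↦ ha (by rw [← hs, h]), slope_def_field, huS, _root_.sub_zero,
      div_eq_mul_inv]
  have hS : re ⁻¹' Set.Icc b c ∈ 𝓝 S := continuous_re.continuousAt (Icc_mem_nhds hb hc)
  have hdE : DifferentiableOn ℂ (dslope u S) (re ⁻¹' Set.Icc b c) :=
    (Complex.differentiableOn_dslope hS).mpr hd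
  rw [hdslope hb.ne, hdslope hc.ne']
  exact verticalIntegral_eq_of_hasGrowthOn (r := r - 1) (by linarith) (hb.trans hc).le hdE
    (hasGrowthOn_dslope (isClosed_Icc.preimage continuous_re) hdE.continuousOn
      (by simpa only [huS, _root_.sub_zero] using hu))

-- Subtracting from `g` the multiple of `(s - p)⁻¹`, `p` the mirror image of `S`, that agrees with
-- `g` at `S` removes the pole and keeps the decay.
theorem verticalIntegral_mul_inv_sub {g : ℂ → ℂ} (hr : r < 0) (hb : b < S.re) (hc : S.re < c)
    (hd : DifferentiableOn ℂ g (re ⁻¹' Set.Icc b c)) (hg : HasGrowthOn g r (re ⁻¹' Set.Icc b c)) :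
    verticalIntegral (fun s ↦ g s * (s - S)⁻¹) c =
      verticalIntegral (fun s ↦ g s * (s - S)⁻¹) b + 2 * π * g S := by
  set p : ℂ := 2 * b - conj S with hp
  set w : ℂ := g S * (2 * (S.re - b)) with hw
  have hpb : p.re < b := reflection_re_lt hb
  have hsub : re ⁻¹' Set.Icc b c ⊆ re ⁻¹' Set.Ici b := Set.preimage_mono Set.Icc_subset_Ici_self
  have hd0 : (S.re - b : ℂ) ≠ 0 := by exact_mod_cast (sub_pos.mpr hb).ne'
  have hSp : S - p = 2 * (S.re - b) := by
    have hadd := add_conj S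
    push_cast at hadd
    linear_combination hadd - hp
  have hpole : HasGrowthOn (fun s ↦ w * (s - p)⁻¹) (-1) (re ⁻¹' Set.Icc b c) :=
    ((HasGrowthOn.const w _).mul (hasGrowthOn_inv_sub_of_re_lt hpb hsub)).mono_exponent (by simp)
  have hdpole : DifferentiableOn ℂ (fun s ↦ w * (s - p)⁻¹) (re ⁻¹' Set.Icc b c) :=
    (differentiableOn_inv_sub_of_re_lt hpb hsub).const_mul w
  have hu : HasGrowthOn (fun s ↦ g s - w * (s - p)⁻¹) (max r (-1)) (re ⁻¹' Set.Icc b c) :=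
    (hg.mono_exponent (le_max_left _ _)).sub (hpole.mono_exponent (le_max_right _ _))
  have hsplit {a : ℝ} (ha : a ∈ Set.Icc b c) (haS : a ≠ S.re) :
      verticalIntegral (fun s ↦ (g s - w * (s - p)⁻¹) * (s - S)⁻¹) a =
        verticalIntegral (fun s ↦ g s * (s - S)⁻¹) a -
          w * verticalIntegral (fun s ↦ (s - p)⁻¹ * (s - S)⁻¹) a := by
    have hmem : re ⁻¹' {a} ⊆ re ⁻¹' Set.Icc b c :=
      Set.preimage_mono (Set.singleton_subset_iff.mpr ha)
    rw [← verticalIntegral_const_mul, ← verticalIntegral_sub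
      (verticalIntegrable_mul_inv_sub hr haS (hd.continuousOn.mono hmem) (hg.mono hmem))]
    · exact verticalIntegral_congr fun s _ ↦ by ring
    · simpa only [mul_assoc] using verticalIntegrable_mul_inv_sub neg_one_lt_zero haS
        (hdpole.continuousOn.mono hmem) (hpole.mono hmem)
  have hshift := verticalIntegral_dslope_eq (max_lt hr neg_one_lt_zero) hb hc (hd.fun_sub hdpole) hu
    (by rw [hSp, hw]; field_simp; ring)
  rw [hsplit ⟨le_rfl, (hb.trans hc).le⟩ hb.ne, hsplit ⟨(hb.trans hc).le, le_rfl⟩ hc.ne',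
    verticalIntegral_inv_sub_mul_inv_sub (hpb.trans (hb.trans hc)) hc, hp,
    verticalIntegral_inv_sub_mul_inv_sub_reflection hb] at hshift
  have hres : w * (π / (S.re - b)) = 2 * π * g S := by rw [hw]; field_simp
  linear_combination hres - hshift

theorem verticalIntegral_mul_inv_sub_sq {h : ℂ → ℂ} (hr0 : 0 ≤ r) (hr1 : r < 1) (hb : b < S.re)
    (hc : S.re < c) (hd : DifferentiableOn ℂ h (re ⁻¹' Set.Icc b c))
    (hh : HasGrowthOn h r (re ⁻¹' Set.Icc b c)) :
    verticalIntegral (fun s ↦ h s * perronKernel 1 S s) c =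
      verticalIntegral (fun s ↦ h s * perronKernel 1 S s) b + 2 * π * deriv h S := by
  have hS : re ⁻¹' Set.Icc b c ∈ 𝓝 S := continuous_re.continuousAt (Icc_mem_nhds hb hc)
  have hdg : DifferentiableOn ℂ (dslope h S) (re ⁻¹' Set.Icc b c) :=
    (Complex.differentiableOn_dslope hS).mpr hd
  have hg := hasGrowthOn_dslope (isClosed_Icc.preimage continuous_re) hdg.continuousOn
    (hh.sub ((HasGrowthOn.const (h S) _).mono_exponent hr0))
  have hline {a : ℝ} (ha : a ∈ Set.Icc b c) (haS : a ≠ S.re)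
      (hzero : verticalIntegral (perronKernel 1 S) a = 0) :
      verticalIntegral (fun s ↦ dslope h S s * (s - S)⁻¹) a =
        verticalIntegral (fun s ↦ h s * perronKernel 1 S s) a := by
    have hmem : re ⁻¹' {a} ⊆ re ⁻¹' Set.Icc b c :=
      Set.preimage_mono (Set.singleton_subset_iff.mpr ha)
    have hInt := verticalIntegral_sub (g := fun s ↦ h S * perronKernel 1 S s)
      (verticalIntegrable_mul_perronKernel hr1 one_pos haS (hd.continuousOn.mono hmem)
        (hh.mono hmem))
      ((verticalIntegrable_perronKernel one_pos haS).const_mul (h S))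
    rw [verticalIntegral_const_mul, hzero, mul_zero, _root_.sub_zero] at hInt
    rw [← hInt]
    refine verticalIntegral_congr fun s hs ↦ ?_
    rw [dslope_of_ne _ fun heq ↦ haS (by rw [← hs, heq]), slope_def_field, perronKernel, ofReal_one,
      one_cpow]
    ring
  have hbc : b ≤ c := (hb.trans hc).le
  rw [← hline ⟨hbc, le_rfl⟩ hc.ne' (verticalIntegral_perronKernel_of_le_one one_pos le_rfl hc),
    ← hline ⟨le_rfl, hbc⟩ hb.ne (verticalIntegral_perronKernel_of_one_le le_rfl hb),
    verticalIntegral_mul_inv_sub (by linarith) hb hc hdg hg, dslope_same]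

end Residues

section PerronFormula

open MeasureTheory Filter Topology Asymptotics

variable {x y b c r : ℝ} {S : ℂ}

theorem verticalIntegral_mul_perronKernel_eq_add {h : ℂ → ℂ} (hx : 1 ≤ x) (hr0 : 0 ≤ r)
    (hr1 : r < 1) (hb : b < S.re) (hc : S.re < c) (hd : DifferentiableOn ℂ h (re ⁻¹' Set.Icc b c))
    (hh : HasGrowthOn h r (re ⁻¹' Set.Icc b c)) :
    verticalIntegral (fun s ↦ h s * perronKernel x S s) c =
      verticalIntegral (fun s ↦ h s * perronKernel x S s) b +
        2 * π * (h S * Real.log x + deriv h S) := by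
  have hx0 : 0 < x := zero_lt_one.trans_le hx
  have hxne : (x : ℂ) ≠ 0 := ofReal_ne_zero.mpr hx0.ne'
  have hpow : HasGrowthOn (fun s ↦ (x : ℂ) ^ (s - S)) 0 (re ⁻¹' Set.Icc b c) :=
    .of_norm_le (M := x ^ (c - S.re)) fun s hs ↦ by
      rw [norm_cpow_eq_rpow_re_of_pos hx0, sub_re]
      exact Real.rpow_le_rpow_of_exponent_le hx (sub_le_sub_right hs.2 _)
  have hdpow : Differentiable ℂ fun s ↦ (x : ℂ) ^ (s - S) :=
    Differentiable.const_cpow (by fun_prop) (.inl hxne)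
  have hS : re ⁻¹' Set.Icc b c ∈ 𝓝 S := continuous_re.continuousAt (Icc_mem_nhds hb hc)
  have hres := verticalIntegral_mul_inv_sub_sq hr0 hr1 hb hc (hd.fun_mul hdpow.differentiableOn)
    (by simpa only [add_zero] using hh.mul hpow)
  have hderiv : deriv (fun s ↦ h s * (x : ℂ) ^ (s - S)) S = h S * Real.log x + deriv h S := by
    have hpow' := ((hasDerivAt_id' S).sub_const S).const_cpow (c := (x : ℂ)) (.inl hxne)
    rw [((hd.differentiableAt hS).hasDerivAt.fun_mul hpow').deriv]
    simp only [sub_self, cpow_zero, ofReal_log hx0.le]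
    ring
  have hker (s : ℂ) : h s * (x : ℂ) ^ (s - S) * perronKernel 1 S s = h s * perronKernel x S s := by
    rw [perronKernel, perronKernel, ofReal_one, one_cpow, one_mul, mul_assoc]
  simpa only [hker, hderiv] using hres

theorem verticalIntegral_perronKernel (hy : 0 < y) (hc : S.re < c) :
    verticalIntegral (perronKernel y S) c = 2 * π * Real.posLog y := by
  rcases le_total y 1 with hy1 | hy1
  · rw [verticalIntegral_perronKernel_of_le_one hy hy1 hc,
      (posLog_eq_zero_iff y).mpr (by rwa [abs_of_pos hy]), ofReal_zero, mul_zero]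
  · have hres := verticalIntegral_mul_perronKernel_eq_add (h := fun _ ↦ 1) hy1 le_rfl one_pos
      (sub_one_lt S.re) hc (differentiableOn_const _) (HasGrowthOn.const 1 _)
    simp only [one_mul, deriv_const, add_zero] at hres
    rw [hres, verticalIntegral_perronKernel_of_one_le hy1 (sub_one_lt S.re), zero_add,
      posLog_eq_log (by rwa [abs_of_pos hy])]

lemma term_mul_perronKernel {n : ℕ} (hn : n ≠ 0) (hx : 0 < x) (a : ℕ → ℂ) (s : ℂ) :
    LSeries.term a s n * perronKernel x S s =
      a n / (n : ℂ) ^ S * perronKernel (x / n) S s := by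
  have hn0 : (n : ℂ) ≠ 0 := by exact_mod_cast hn
  have hadd : (n : ℂ) ^ s = (n : ℂ) ^ (s - S) * (n : ℂ) ^ S := by
    rw [← cpow_add _ _ hn0, sub_add_cancel]
  have hmul : (x : ℂ) ^ (s - S) = ((x / n : ℝ) : ℂ) ^ (s - S) * (n : ℂ) ^ (s - S) := by
    rw [← ofReal_natCast, ← mul_cpow_ofReal_nonneg (by positivity) (by positivity), ← ofReal_mul,
      div_mul_cancel₀ _ (by exact_mod_cast hn)]
  have hne : (n : ℂ) ^ (s - S) ≠ 0 := by simp [cpow_eq_zero_iff, hn0]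
  rw [LSeries.term_of_ne_zero hn, perronKernel, perronKernel, hadd, hmul]
  field_simp

lemma verticalIntegral_term_mul_perronKernel (hx : 0 < x) (hc : S.re < c) (a : ℕ → ℂ) (n : ℕ) :
    verticalIntegral (fun s ↦ LSeries.term a s n * perronKernel x S s) c =
      2 * π * (LSeries.term a S n * Real.posLog (x / n)) := by
  rcases eq_or_ne n 0 with rfl | hn
  · simp [verticalIntegral]
  · have hn0 : 0 < (n : ℝ) := by positivity
    simp only [term_mul_perronKernel hn hx]
    rw [verticalIntegral_const_mul, verticalIntegral_perronKernel (div_pos hx hn0) hc,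
      LSeries.term_of_ne_zero hn]
    ring

lemma verticalIntegrable_term_mul_perronKernel (hx : 0 < x) (hc : S.re < c) (a : ℕ → ℂ) (n : ℕ) :
    VerticalIntegrable (fun s ↦ LSeries.term a s n * perronKernel x S s) c := by
  rcases eq_or_ne n 0 with rfl | hn
  · simp [VerticalIntegrable]
  · simp only [term_mul_perronKernel hn hx]
    exact (verticalIntegrable_perronKernel (by positivity) hc.ne').const_mul _

lemma tsum_term_mul_posLog (a : ℕ → ℂ) (hx : 0 < x) (S : ℂ) :
    ∑' n, LSeries.term a S n * Real.posLog (x / n) =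
      ∑ n ∈ Finset.Icc 1 ⌊x⌋₊, a n / (n : ℂ) ^ S * Real.log (x / n) := by
  rw [tsum_eq_sum (s := Finset.Icc 1 ⌊x⌋₊)]
  · refine Finset.sum_congr rfl fun n hn ↦ ?_
    obtain ⟨hn1, hnx⟩ := Finset.mem_Icc.mp hn
    have hn0 : 0 < (n : ℝ) := by exact_mod_cast hn1
    rw [LSeries.term_of_ne_zero (by lia), posLog_eq_log]
    rw [abs_of_pos (by positivity), one_le_div hn0]
    exact (Nat.le_floor_iff hx.le).mp hnx
  · intro n hn
    rcases eq_or_ne n 0 with rfl | hn0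
    · rw [LSeries.term_zero, zero_mul]
    · have hxn : x < n := by
        contrapose! hn
        exact Finset.mem_Icc.mpr ⟨by lia, Nat.le_floor hn⟩
      have hlog : Real.posLog (x / n) = 0 := by
        rw [posLog_eq_zero_iff, abs_of_nonneg (by positivity)]
        exact div_le_one_of_le₀ hxn.le (by positivity)
      rw [hlog, ofReal_zero, mul_zero]

theorem verticalIntegral_LSeries_mul_perronKernel {a : ℕ → ℂ} (hx : 0 < x) (hc : S.re < c)
    (ha : LSeriesSummable a c) :
    verticalIntegral (fun s ↦ LSeries a s * perronKernel x S s) c =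
      2 * π * ∑ n ∈ Finset.Icc 1 ⌊x⌋₊, a n / (n : ℂ) ^ S * Real.log (x / n) := by
  have hnorm (n : ℕ) (v : ℝ) :
      ‖LSeries.term a (c + v * I) n‖ = ‖LSeries.term a c n‖ := by
    simp [LSeries.norm_term_eq]
  have hsummable : Summable fun n ↦
      ∫ v : ℝ, ‖LSeries.term a (c + v * I) n * perronKernel x S (c + v * I)‖ := by
    simp only [norm_mul, hnorm, integral_const_mul]
    exact ha.norm.mul_right _
  have hsum := hasSum_integral_of_summable_integral_norm
    (fun n ↦ verticalIntegrable_term_mul_perronKernel hx hc a n) hsummable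
  simp only [tsum_mul_right] at hsum
  calc verticalIntegral (fun s ↦ LSeries a s * perronKernel x S s) c
      = ∑' n, verticalIntegral (fun s ↦ LSeries.term a s n * perronKernel x S s) c :=
        hsum.tsum_eq.symm
    _ = 2 * π * ∑' n, LSeries.term a S n * Real.posLog (x / n) := by
        simp only [verticalIntegral_term_mul_perronKernel hx hc, tsum_mul_left]
    _ = _ := by rw [tsum_term_mul_posLog a hx]

end PerronFormula

section PoissonFormula

open MeasureTheory Filter Asymptotics
open scoped ComplexConjugate

variable {f : ℂ → ℂ} {b r x : ℝ} {S : ℂ}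

lemma preimage_re_singleton_subset_Ici (b : ℝ) : re ⁻¹' {b} ⊆ re ⁻¹' Set.Ici b :=
  Set.preimage_mono (Set.singleton_subset_iff.mpr Set.self_mem_Ici)

lemma differentiableOn_mul_inv_sub_reflection (hb : b < S.re)
    (hd : DifferentiableOn ℂ f (re ⁻¹' Set.Ici b)) :
    DifferentiableOn ℂ (fun s ↦ f s * (s - (2 * b - conj S))⁻¹) (re ⁻¹' Set.Ici b) :=
  hd.fun_mul (differentiableOn_inv_sub_of_re_lt (reflection_re_lt hb) subset_rfl)

lemma hasGrowthOn_mul_inv_sub_reflection (hb : b < S.re)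
    (hf : HasGrowthOn f r (re ⁻¹' Set.Ici b)) :
    HasGrowthOn (fun s ↦ f s * (s - (2 * b - conj S))⁻¹) (r - 1) (re ⁻¹' Set.Ici b) :=
  hf.mul (hasGrowthOn_inv_sub_of_re_lt (reflection_re_lt hb) subset_rfl)

lemma verticalIntegrable_mul_inv_norm_sub_sq (hr : r < 1) (hb : b < S.re)
    (hd : DifferentiableOn ℂ f (re ⁻¹' Set.Ici b)) (hf : HasGrowthOn f r (re ⁻¹' Set.Ici b)) :
    VerticalIntegrable (fun s ↦ f s * ((‖s - S‖ ^ 2)⁻¹ : ℝ)) b := by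
  have hline := preimage_re_singleton_subset_Ici b
  refine (verticalIntegrable_mul_inv_sub (S := S) (by linarith) hb.ne
    ((differentiableOn_mul_inv_sub_reflection hb hd).continuousOn.mono hline)
    ((hasGrowthOn_mul_inv_sub_reflection hb hf).mono hline)).neg.congr (.of_forall fun v ↦ ?_)
  simp only [Pi.neg_apply]
  rw [mul_assoc, inv_sub_mul_inv_sub_reflection (by simp), mul_neg, neg_neg]

lemma verticalIntegral_mul_inv_norm_sub_sq (hr : r < 1) (hb : b < S.re)
    (hd : DifferentiableOn ℂ f (re ⁻¹' Set.Ici b)) (hf : HasGrowthOn f r (re ⁻¹' Set.Ici b)) :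
    verticalIntegral (fun s ↦ f s * ((‖s - S‖ ^ 2)⁻¹ : ℝ)) b = (π / (S.re - b) : ℝ) * f S := by
  set g : ℂ → ℂ := fun s ↦ f s * (s - (2 * b - conj S))⁻¹
  have hdg : DifferentiableOn ℂ g (re ⁻¹' Set.Ici b) :=
    differentiableOn_mul_inv_sub_reflection hb hd
  have hg : HasGrowthOn g (r - 1) (re ⁻¹' Set.Ici b) := hasGrowthOn_mul_inv_sub_reflection hb hf
  have hc : S.re < S.re + 1 := lt_add_one _
  have hstrip : re ⁻¹' Set.Icc b (S.re + 1) ⊆ re ⁻¹' Set.Ici b :=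
    Set.preimage_mono Set.Icc_subset_Ici_self
  have hright : re ⁻¹' Set.Ici (S.re + 1) ⊆ re ⁻¹' Set.Ici b :=
    Set.preimage_mono (Set.Ici_subset_Ici.mpr (hb.trans hc).le)
  have hzero : verticalIntegral (fun s ↦ g s * (s - S)⁻¹) (S.re + 1) = 0 :=
    verticalIntegral_eq_zero_of_hasGrowthOn (by linarith)
      ((hdg.mono hright).fun_mul (differentiableOn_inv_sub_of_re_lt hc subset_rfl))
      ((hg.mono hright).mul (hasGrowthOn_inv_sub_of_re_lt hc subset_rfl))
  have hres := verticalIntegral_mul_inv_sub (by linarith) hb hc (hdg.mono hstrip) (hg.mono hstrip)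
  have hneg : verticalIntegral (fun s ↦ f s * ((‖s - S‖ ^ 2)⁻¹ : ℝ)) b =
      -1 * verticalIntegral (fun s ↦ g s * (s - S)⁻¹) b := by
    rw [← verticalIntegral_const_mul]
    refine verticalIntegral_congr fun s hs ↦ ?_
    rw [mul_assoc, inv_sub_mul_inv_sub_reflection hs, mul_neg, neg_one_mul, neg_neg]
  have hgS : 2 * π * g S = (π / (S.re - b) : ℝ) * f S := by
    have hS : S - (2 * b - conj S) = 2 * ((S.re - b : ℝ) : ℂ) := by
      have hadd := add_conj S
      push_cast at hadd ⊢
      linear_combination hadd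
    have hne : ((S.re - b : ℝ) : ℂ) ≠ 0 := ofReal_ne_zero.mpr (sub_pos.mpr hb).ne'
    simp only [g, hS, ofReal_div]
    field_simp
  rw [hneg]
  linear_combination hgS + hres - hzero

lemma integrable_re_mul_inv_norm_sub_sq (hr : r < 1) (hb : b < S.re)
    (hd : DifferentiableOn ℂ f (re ⁻¹' Set.Ici b)) (hf : HasGrowthOn f r (re ⁻¹' Set.Ici b)) :
    Integrable fun v : ℝ ↦ (f (b + v * I)).re * (‖(b + v * I : ℂ) - S‖ ^ 2)⁻¹ := by
  simpa only [re_mul_ofReal, RCLike.re_eq_complex_re] using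
    (verticalIntegrable_mul_inv_norm_sub_sq hr hb hd hf).re

theorem integral_re_mul_inv_norm_sub_sq (hr : r < 1) (hb : b < S.re)
    (hd : DifferentiableOn ℂ f (re ⁻¹' Set.Ici b)) (hf : HasGrowthOn f r (re ⁻¹' Set.Ici b)) :
    ∫ v : ℝ, (f (b + v * I)).re * (‖(b + v * I : ℂ) - S‖ ^ 2)⁻¹ =
      π / (S.re - b) * (f S).re := by
  rw [← re_ofReal_mul, ← verticalIntegral_mul_inv_norm_sub_sq hr hb hd hf, verticalIntegral,
    ← RCLike.re_eq_complex_re, ← integral_re (verticalIntegrable_mul_inv_norm_sub_sq hr hb hd hf)]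
  simp only [RCLike.re_eq_complex_re, re_mul_ofReal]

lemma verticalIntegral_conj_mul_perronKernel (hx : 1 ≤ x) (hr : r < 1) (hb : b < S.re)
    (hd : DifferentiableOn ℂ f (re ⁻¹' Set.Ici b)) (hf : HasGrowthOn f r (re ⁻¹' Set.Ici b)) :
    verticalIntegral (fun s ↦ conj (f s) * perronKernel x S s) b = 0 := by
  have hx0 : 0 < x := zero_lt_one.trans_le hx
  have hzero := verticalIntegral_mul_perronKernel_eq_zero hr (inv_pos.mpr hx0)
    (inv_le_one_of_one_le₀ hx) (reflection_re_lt hb) hd hf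
  have hcongr : verticalIntegral (fun s ↦ f s * conj (perronKernel x S s)) b = 0 :=
    (verticalIntegral_congr fun s hs ↦ by rw [conj_perronKernel hx0 hs]).trans hzero
  rw [verticalIntegral, ← map_eq_zero (starRingEnd ℂ), ← integral_conj]
  simpa only [verticalIntegral, _root_.map_mul, Complex.conj_conj] using hcongr

lemma verticalIntegral_mul_perronKernel_eq_re (hx : 1 ≤ x) (hr : r < 1) (hb : b < S.re)
    (hd : DifferentiableOn ℂ f (re ⁻¹' Set.Ici b)) (hf : HasGrowthOn f r (re ⁻¹' Set.Ici b)) :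
    verticalIntegral (fun s ↦ f s * perronKernel x S s) b =
      verticalIntegral (fun s ↦ (2 * (f s).re : ℝ) * perronKernel x S s) b := by
  have hline := preimage_re_singleton_subset_Ici b
  have hx0 : 0 < x := zero_lt_one.trans_le hx
  have hInt := verticalIntegrable_mul_perronKernel hr hx0 hb.ne (hd.continuousOn.mono hline)
    (hf.mono hline)
  have hInt' : VerticalIntegrable (fun s ↦ conj (f s) * perronKernel x S s) b :=
    verticalIntegrable_mul_perronKernel hr hx0 hb.ne
      (continuous_conj.comp_continuousOn (hd.continuousOn.mono hline))
      (.of_norm_left (by simpa only [norm_conj] using (hf.mono hline).norm_left))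
  rw [← add_zero (verticalIntegral _ b), ← verticalIntegral_conj_mul_perronKernel hx hr hb hd hf,
    ← verticalIntegral_add hInt hInt']
  exact verticalIntegral_congr fun s _ ↦ by rw [← add_mul, add_conj]

theorem norm_verticalIntegral_mul_perronKernel_le {S₀ : ℂ} (hx : 1 ≤ x) (hr : r < 1)
    (hb : b < S₀.re) (hre : S₀.re ≤ S.re) (him : S₀.im = S.im)
    (hd : DifferentiableOn ℂ f (re ⁻¹' Set.Ici b)) (hf : HasGrowthOn f r (re ⁻¹' Set.Ici b))
    (hpos : ∀ s : ℂ, s.re = b → 0 ≤ (f s).re) :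
    ‖verticalIntegral (fun s ↦ f s * perronKernel x S s) b‖ ≤
      2 * π * (x ^ (b - S.re) * ((f S₀).re / (S₀.re - b))) := by
  have hx0 : 0 < x := zero_lt_one.trans_le hx
  have hvalue : ∫ v : ℝ, 2 * x ^ (b - S.re) *
      ((f (b + v * I)).re * (‖(b + v * I : ℂ) - S₀‖ ^ 2)⁻¹) =
      2 * π * (x ^ (b - S.re) * ((f S₀).re / (S₀.re - b))) := by
    rw [integral_const_mul, integral_re_mul_inv_norm_sub_sq hr hb hd hf]
    ring
  rw [verticalIntegral_mul_perronKernel_eq_re hx hr (hb.trans_le hre) hd hf, ← hvalue]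
  refine norm_integral_le_of_norm_le
    ((integrable_re_mul_inv_norm_sub_sq hr hb hd hf).const_mul _) (.of_forall fun v ↦ ?_)
  have hline : (b + v * I : ℂ).re = b := by simp
  have hfv := hpos _ hline
  have hS₀ : 0 < ‖(b + v * I : ℂ) - S₀‖ :=
    norm_pos_iff.mpr (sub_ne_zero.mpr fun h ↦ hb.ne (by rw [← h, hline]))
  have hnorm : ‖(b + v * I : ℂ) - S₀‖ ≤ ‖(b + v * I : ℂ) - S‖ := by
    rw [← sq_le_sq₀ (norm_nonneg _) (norm_nonneg _), ← normSq_eq_norm_sq, ← normSq_eq_norm_sq,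
      normSq_apply, normSq_apply, sub_re, sub_im, sub_re, sub_im, him, hline]
    nlinarith
  rw [norm_mul, norm_perronKernel hx0, norm_real, Real.norm_of_nonneg (by positivity), hline]
  calc 2 * (f (b + v * I)).re * (x ^ (b - S.re) * (‖(b + v * I : ℂ) - S‖ ^ 2)⁻¹)
      ≤ 2 * (f (b + v * I)).re * (x ^ (b - S.re) * (‖(b + v * I : ℂ) - S₀‖ ^ 2)⁻¹) := by gcongr
    _ = _ := by ring

end PoissonFormula

section GrowthExtension

open Metric Filter Asymptotics

variable {f : ℂ → ℂ} {α b c r : ℝ}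

lemma norm_le_of_re_nonneg (hd : DifferentiableOn ℂ f (re ⁻¹' Set.Ioi α))
    (hpos : ∀ s : ℂ, α < s.re → 0 ≤ (f s).re) {s : ℂ} (hs : α < s.re) (hsc : s.re ≤ c) :
    ‖f s‖ ≤ 2 * (c - α) / (s.re - α) * (1 + ‖f (c + s.im * I)‖) := by
  have hnorm : ‖((s.re - c : ℝ) : ℂ)‖ = c - s.re := by
    rw [norm_real, Real.norm_of_nonpos (by linarith), neg_sub]
  have hmaps : ∀ u ∈ ball (0 : ℂ) (c - α), α < (c + s.im * I + u).re := fun u hu ↦ by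
    have hu' := neg_le_of_abs_le (abs_re_le_norm u)
    rw [mem_ball_zero_iff] at hu
    simp only [add_re, ofReal_re, re_ofReal_mul, I_re, mul_zero, add_zero]
    linarith
  have hbound := borelCaratheodory (f := fun u ↦ -f (c + s.im * I + u)) (M := 1) (R := c - α)
    (z := (s.re - c : ℝ)) one_pos (hd.comp (by fun_prop) hmaps).neg
    (fun u hu ↦ by
      have := hpos _ (hmaps u hu)
      simp only [Set.mem_ofPred_eq, neg_re]
      linarith)
    (by linarith) (by rw [mem_ball_zero_iff, hnorm]; linarith)
  have hcenter : (c + s.im * I + (s.re - c : ℝ) : ℂ) = s := by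
    apply Complex.ext <;> simp
  simp only [hcenter, norm_neg, hnorm, add_zero] at hbound
  have hden : c - α - (c - s.re) = s.re - α := by ring
  rw [hden] at hbound
  have : 0 < s.re - α := by linarith
  calc ‖f s‖ ≤ _ := hbound
    _ = (2 * (c - s.re) + ‖f (c + s.im * I)‖ * (c - α + (c - s.re))) / (s.re - α) := by ring
    _ ≤ (2 * (c - α) + ‖f (c + s.im * I)‖ * (2 * (c - α))) / (s.re - α) := by
        gcongr
        all_goals linarith
    _ = _ := by ring

lemma hasGrowthOn_comp_vertical_projection (hr : 0 ≤ r) (hf : HasGrowthOn f r (re ⁻¹' {c}))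
    (A : Set ℂ) : HasGrowthOn (fun s ↦ f (c + s.im * I)) r A := by
  have hlin : (fun s : ℂ ↦ 1 + ‖(c + s.im * I : ℂ)‖) =O[𝓟 A] fun s ↦ 1 + ‖s‖ := by
    refine .of_bound (1 + |c|) (.of_forall fun s ↦ ?_)
    rw [Real.norm_of_nonneg (by positivity), Real.norm_of_nonneg (by positivity)]
    have hnorm : ‖(c + s.im * I : ℂ)‖ ≤ |c| + |s.im| := by
      simpa using norm_add_le (c : ℂ) (s.im * I)
    nlinarith [abs_im_le_norm s, abs_nonneg c, norm_nonneg s]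
  have hcomp := hf.comp_tendsto (k := fun s : ℂ ↦ (c + s.im * I : ℂ)) (l' := 𝓟 A)
    (tendsto_principal_principal.mpr fun s _ ↦ by simp)
  exact hcomp.trans (hlin.rpow hr (.of_forall fun s ↦ by positivity))

theorem HasGrowthOn.of_re_nonneg (hr : 0 ≤ r) (hαb : α < b)
    (hd : DifferentiableOn ℂ f (re ⁻¹' Set.Ioi α)) (hpos : ∀ s : ℂ, α < s.re → 0 ≤ (f s).re)
    (hf : HasGrowthOn f r (re ⁻¹' Set.Ici c)) : HasGrowthOn f r (re ⁻¹' Set.Ici b) := by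
  have hstrip : HasGrowthOn f r (re ⁻¹' Set.Icc b c) := by
    have hproj : HasGrowthOn (fun s ↦ f (c + s.im * I)) r (re ⁻¹' Set.Icc b c) :=
      hasGrowthOn_comp_vertical_projection hr
        (hf.mono (Set.preimage_mono (Set.singleton_subset_iff.mpr Set.self_mem_Ici))) _
    have hone : HasGrowthOn (fun _ ↦ 1) r (re ⁻¹' Set.Icc b c) :=
      (HasGrowthOn.const 1 _).mono_exponent hr
    refine IsBigO.trans (isBigO_principal.mpr ⟨2 * (c - α) / (b - α), fun s hs ↦ ?_⟩)
      (hone.norm_left.add hproj.norm_left)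
    have : 0 < b - α := by linarith
    have : 0 ≤ c - α := by linarith [hs.1.trans hs.2]
    rw [norm_one, Real.norm_of_nonneg (by positivity)]
    refine (norm_le_of_re_nonneg hd hpos (hαb.trans_le hs.1) hs.2).trans ?_
    gcongr
    exact hs.1
  refine (hstrip.sup hf).mono ?_
  rw [sup_principal, ← Set.preimage_union]
  exact principal_mono.mpr (Set.preimage_mono fun u hu ↦
    (le_total u c).imp (fun huc ↦ ⟨hu, huc⟩) id)

lemma hasGrowthOn_LSeries {a : ℕ → ℂ} (ha : LSeriesSummable a c) :
    HasGrowthOn (LSeries a) 0 (re ⁻¹' Set.Ici c) := by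
  refine .of_norm_le (M := ∑' n, ‖LSeries.term a c n‖) fun s (hs : c ≤ s.re) ↦ ?_
  have hs' : LSeriesSummable a s := ha.of_re_le_re (by simpa using hs)
  exact (norm_tsum_le_tsum_norm hs'.norm).trans (hs'.norm.tsum_le_tsum
    (fun n ↦ LSeries.norm_term_le_of_re_le_re _ (by simpa using hs) n) ha.norm)

end GrowthExtension

section ExplicitFormula

open Filter Asymptotics

variable {b r x : ℝ} {S : ℂ}

theorem mul_log_add_deriv_add_sum_eq_verticalIntegral {h : ℂ → ℂ} {a : ℕ → ℂ} {c : ℝ}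
    (hx : 1 ≤ x) (hr0 : 0 ≤ r) (hr1 : r < 1) (hb : b < S.re) (hc : S.re < c)
    (hd : DifferentiableOn ℂ h (re ⁻¹' Set.Ici b)) (hh : HasGrowthOn h r (re ⁻¹' Set.Ici b))
    (ha : LSeriesSummable a c) (hha : ∀ s : ℂ, s.re = c → h s = -LSeries a s) :
    h S * Real.log x + deriv h S +
        ∑ n ∈ Finset.Icc 1 ⌊x⌋₊, a n / (n : ℂ) ^ S * Real.log (x / n) =
      -(2 * π : ℝ)⁻¹ * verticalIntegral (fun s ↦ h s * perronKernel x S s) b := by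
  have hstrip : re ⁻¹' Set.Icc b c ⊆ re ⁻¹' Set.Ici b := Set.preimage_mono Set.Icc_subset_Ici_self
  have hres := verticalIntegral_mul_perronKernel_eq_add hx hr0 hr1 hb hc (hd.mono hstrip)
    (hh.mono hstrip)
  have hright : verticalIntegral (fun s ↦ h s * perronKernel x S s) c =
      -1 * verticalIntegral (fun s ↦ LSeries a s * perronKernel x S s) c := by
    rw [← verticalIntegral_const_mul]
    exact verticalIntegral_congr fun s hs ↦ by rw [hha s hs]; ring
  rw [hright, verticalIntegral_LSeries_mul_perronKernel (zero_lt_one.trans_le hx) hc ha] at hres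
  have hpi : (2 * π : ℂ) ≠ 0 := mul_ne_zero two_ne_zero (ofReal_ne_zero.mpr pi_ne_zero)
  rw [eq_sub_of_add_eq hres.symm]
  push_cast
  rw [← mul_right_inj' hpi, ← mul_assoc, mul_neg, mul_inv_cancel₀ hpi]
  ring

lemma verticalIntegral_mul_perronKernel_eq_of_lt {f : ℂ → ℂ} {c : ℝ} (hx : 1 ≤ x) (hr : r < 1)
    (hbc : b ≤ c) (hc : c < S.re) (hd : DifferentiableOn ℂ f (re ⁻¹' Set.Icc b c))
    (hf : HasGrowthOn f r (re ⁻¹' Set.Icc b c)) :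
    verticalIntegral (fun s ↦ f s * perronKernel x S s) b =
      verticalIntegral (fun s ↦ f s * perronKernel x S s) c := by
  have hx0 : 0 < x := zero_lt_one.trans_le hx
  have hsub : ∀ s ∈ re ⁻¹' Set.Icc b c, S.re - c ≤ ‖s - S‖ := fun s hs ↦ by
    rw [norm_sub_rev]
    refine le_trans ?_ (re_le_norm (S - s))
    rw [sub_re]
    linarith [hs.2]
  have hK : HasGrowthOn (perronKernel x S) (-2) (re ⁻¹' Set.Icc b c) :=
    hasGrowthOn_perronKernel hx0 (hasGrowthOn_inv_sub (sub_pos.mpr hc) hsub) fun s hs ↦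
      Real.rpow_le_one_of_one_le_of_nonpos hx (by linarith [hs.2])
  refine verticalIntegral_eq_of_hasGrowthOn (by linarith) hbc
    (hd.fun_mul fun s hs ↦ (differentiableAt_perronKernel hx0 ?_).differentiableWithinAt)
    (hf.mul hK)
  rintro rfl
  exact absurd hs.2 hc.not_ge

lemma one_le_norm_one_add_sub_mul_I (t : ℝ) {s : ℂ} (hs : 0 ≤ s.re) : 1 ≤ ‖1 + s - t * I‖ :=
  (by simpa using hs : 1 ≤ (1 + s - t * I).re).trans (re_le_norm _)

lemma differentiableOn_log_one_add_sub_mul_I (t : ℝ) :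
    DifferentiableOn ℂ (fun s ↦ Complex.log (1 + s - t * I)) (re ⁻¹' Set.Ici 0) := by
  refine DifferentiableOn.clog (by fun_prop) fun s (hs : 0 ≤ s.re) ↦ .inl ?_
  simp only [sub_re, add_re, one_re, re_ofReal_mul, I_re, mul_zero, _root_.sub_zero]
  linarith

lemma hasGrowthOn_log_one_add_sub_mul_I (t : ℝ) (hr : 0 < r) :
    HasGrowthOn (fun s ↦ Complex.log (1 + s - t * I)) r (re ⁻¹' Set.Ici 0) := by
  have hlin : (fun s : ℂ ↦ ‖1 + s - t * I‖) =O[𝓟 (re ⁻¹' Set.Ici 0)] fun s ↦ 1 + ‖s‖ := by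
    refine .of_bound (1 + |t|) (.of_forall fun s ↦ ?_)
    rw [norm_norm, Real.norm_of_nonneg (by positivity)]
    have hsub : ‖1 + s - t * I‖ ≤ 1 + ‖s‖ + |t| := by
      simpa using (norm_sub_le (1 + s) (t * I)).trans (add_le_add_left (norm_add_le 1 s) _)
    nlinarith [abs_nonneg t, norm_nonneg s]
  refine IsBigO.trans (isBigO_principal.mpr ⟨1 / r + π, fun s (hs : 0 ≤ s.re) ↦ ?_⟩)
    (hlin.rpow hr.le (.of_forall fun s ↦ by positivity))
  have hone := one_le_norm_one_add_sub_mul_I t hs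
  have hlog : Real.log ‖1 + s - t * I‖ ≤ ‖1 + s - t * I‖ ^ r / r :=
    Real.log_le_rpow_div (norm_nonneg _) hr
  have hpow : 1 ≤ ‖1 + s - t * I‖ ^ r := Real.one_le_rpow hone hr.le
  rw [Real.norm_of_nonneg (by positivity)]
  calc ‖Complex.log (1 + s - t * I)‖
      ≤ |(Complex.log (1 + s - t * I)).re| + |(Complex.log (1 + s - t * I)).im| :=
        norm_le_abs_re_add_abs_im _
    _ ≤ ‖1 + s - t * I‖ ^ r / r + π * 1 := by
        rw [log_re, log_im, abs_of_nonneg (Real.log_nonneg hone), mul_one]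
        exact add_le_add hlog (abs_arg_le_pi _)
    _ ≤ ‖1 + s - t * I‖ ^ r / r + π * ‖1 + s - t * I‖ ^ r := by gcongr
    _ = _ := by ring

lemma re_log_one_add_add_mul_I_sub (σ t : ℝ) :
    (Complex.log (1 + (σ + t * I) - t * I)).re = Real.log (1 + σ) := by
  have hreal : (1 + (σ + t * I) - t * I : ℂ) = (1 + σ : ℝ) := by push_cast; ring
  rw [hreal, log_ofReal_re]

-- On `Re s = b` the kernel is only bounded by `x ^ (b - Re S)`; on `Re s = 0`, where the logarithm
-- is still holomorphic with nonnegative real part, it gains the full factor `x ^ (-Re S)`.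
lemma norm_verticalIntegral_log_mul_perronKernel_le {σ : ℝ} (t : ℝ) (hx : 1 ≤ x) (hb : 0 ≤ b)
    (hbσ : b < σ) :
    ‖verticalIntegral (fun s ↦ Complex.log (1 + s - t * I) * perronKernel x (σ + t * I) s) b‖ ≤
      2 * π * x ^ (-σ) := by
  have hσ : 0 < σ := hb.trans_lt hbσ
  have hd := differentiableOn_log_one_add_sub_mul_I t
  have hgrowth := hasGrowthOn_log_one_add_sub_mul_I t (r := 1 / 2) (by norm_num)
  have hstrip : re ⁻¹' Set.Icc 0 b ⊆ re ⁻¹' Set.Ici 0 := Set.preimage_mono Set.Icc_subset_Ici_self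
  have hre : (σ + t * I : ℂ).re = σ := by simp
  have hline := norm_verticalIntegral_mul_perronKernel_le (S := σ + t * I) hx (by norm_num)
    (by rwa [hre]) le_rfl rfl hd hgrowth fun s hs ↦ by
      rw [log_re]
      exact Real.log_nonneg (one_le_norm_one_add_sub_mul_I t hs.ge)
  rw [← verticalIntegral_mul_perronKernel_eq_of_lt hx (by norm_num) hb (by rwa [hre])
    (hd.mono hstrip) (hgrowth.mono hstrip)]
  refine hline.trans ?_
  rw [re_log_one_add_add_mul_I_sub, hre, zero_sub, _root_.sub_zero]
  have hlog : Real.log (1 + σ) / σ ≤ 1 :=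
    (div_le_one₀ hσ).mpr (by linarith [Real.log_le_sub_one_of_pos (x := 1 + σ) (by linarith)])
  gcongr
  exact mul_le_of_le_one_right (by positivity) hlog

/-- The term `κ + log (1 + s - it) / 2` which, added to a function whose real part may be of size
`-log |s|`, makes the real part nonnegative. -/
noncomputable def logCorrection (κ t : ℝ) (s : ℂ) : ℂ :=
  κ + (1 / 2 : ℝ) * Complex.log (1 + s - t * I)

lemma re_logCorrection (κ t : ℝ) (s : ℂ) :
    (logCorrection κ t s).re = κ + Real.log ‖1 + s - t * I‖ / 2 := by
  rw [logCorrection, add_re, ofReal_re, re_ofReal_mul, log_re]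
  ring

lemma differentiableOn_logCorrection (κ t : ℝ) :
    DifferentiableOn ℂ (logCorrection κ t) (re ⁻¹' Set.Ici 0) :=
  ((differentiableOn_log_one_add_sub_mul_I t).const_mul _).const_add _

lemma hasGrowthOn_logCorrection (κ t : ℝ) (hr : 0 < r) :
    HasGrowthOn (logCorrection κ t) r (re ⁻¹' Set.Ici 0) :=
  ((HasGrowthOn.const (κ : ℂ) _).mono_exponent hr.le).add
    ((hasGrowthOn_log_one_add_sub_mul_I t hr).const_mul_left _)

lemma verticalIntegrable_mul_perronKernel_of_le {f : ℂ → ℂ} {a : ℝ} (hr : r < 1) (hx : 0 < x)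
    (hab : a ≤ b) (hb : b ≠ S.re) (hd : DifferentiableOn ℂ f (re ⁻¹' Set.Ici a))
    (hf : HasGrowthOn f r (re ⁻¹' Set.Ici a)) :
    VerticalIntegrable (fun s ↦ f s * perronKernel x S s) b :=
  have hline : re ⁻¹' {b} ⊆ re ⁻¹' Set.Ici a :=
    Set.preimage_mono (Set.singleton_subset_iff.mpr hab)
  verticalIntegrable_mul_perronKernel hr hx hb (hd.continuousOn.mono hline) (hf.mono hline)

lemma norm_verticalIntegral_logCorrection_mul_perronKernel_le {σ : ℝ} (κ t : ℝ) (hx : 1 ≤ x)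
    (hb : 0 ≤ b) (hbσ : b < σ) :
    ‖verticalIntegral (fun s ↦ logCorrection κ t s * perronKernel x (σ + t * I) s) b‖ ≤
      π * x ^ (-σ) := by
  set K : ℂ → ℂ := perronKernel x (σ + t * I)
  have hre : b < (σ + t * I : ℂ).re := by simpa using hbσ
  have hx0 : 0 < x := zero_lt_one.trans_le hx
  have hconst : VerticalIntegrable (fun s ↦ κ * K s) b :=
    (verticalIntegrable_perronKernel hx0 hre.ne).const_mul _
  have hlog : VerticalIntegrable
      (fun s ↦ (1 / 2 : ℝ) * (Complex.log (1 + s - t * I) * K s)) b :=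
    (verticalIntegrable_mul_perronKernel_of_le one_half_lt_one hx0 hb hre.ne
      (differentiableOn_log_one_add_sub_mul_I t)
      (hasGrowthOn_log_one_add_sub_mul_I t one_half_pos)).const_mul _
  have hsplit : verticalIntegral (fun s ↦ logCorrection κ t s * K s) b =
      (1 / 2 : ℝ) * verticalIntegral (fun s ↦ Complex.log (1 + s - t * I) * K s) b := by
    have hadd := verticalIntegral_add hconst hlog
    rw [verticalIntegral_const_mul, verticalIntegral_const_mul,
      verticalIntegral_perronKernel_of_one_le hx hre, mul_zero, zero_add] at hadd
    rw [← hadd]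
    exact verticalIntegral_congr fun s _ ↦ by rw [logCorrection]; ring
  rw [hsplit, norm_mul, norm_real, Real.norm_of_nonneg one_half_pos.le]
  linarith [norm_verticalIntegral_log_mul_perronKernel_le t hx hb hbσ]

variable {h : ℂ → ℂ} {a : ℕ → ℂ} {α c κ t σ σ₀ : ℝ}

lemma norm_verticalIntegral_mul_perronKernel_le_of_re_add_logCorrection_nonneg (hr0 : 0 < r)
    (hr1 : r < 1) (hx : 1 ≤ x) (hb0 : 0 ≤ b) (hb : b < σ₀) (hσ : σ₀ ≤ σ)
    (hd : DifferentiableOn ℂ h (re ⁻¹' Set.Ici b)) (hh : HasGrowthOn h r (re ⁻¹' Set.Ici b))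
    (hpos : ∀ s : ℂ, s.re = b → 0 ≤ (h s + logCorrection κ t s).re) :
    ‖verticalIntegral (fun s ↦ h s * perronKernel x (σ + t * I) s) b‖ ≤
      2 * π * (x ^ (b - σ) *
        ((h (σ₀ + t * I) + logCorrection κ t (σ₀ + t * I)).re / (σ₀ - b))) + π * x ^ (-σ) := by
  have hx0 : 0 < x := zero_lt_one.trans_le hx
  have hre (u : ℝ) : (u + t * I : ℂ).re = u := by simp
  have hbσ : b ≠ (σ + t * I : ℂ).re := by rw [hre]; exact (hb.trans_le hσ).ne
  have hsub : re ⁻¹' Set.Ici b ⊆ re ⁻¹' Set.Ici 0 :=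
    Set.preimage_mono (Set.Ici_subset_Ici.mpr hb0)
  have hdw := (differentiableOn_logCorrection κ t).mono hsub
  have hw := (hasGrowthOn_logCorrection κ t hr0).mono hsub
  have hadd := verticalIntegral_add
    (verticalIntegrable_mul_perronKernel_of_le hr1 hx0 le_rfl hbσ hd hh)
    (verticalIntegrable_mul_perronKernel_of_le hr1 hx0 le_rfl hbσ hdw hw)
  simp only [← add_mul] at hadd
  have hmain := norm_verticalIntegral_mul_perronKernel_le (S := σ + t * I) (S₀ := σ₀ + t * I) hx
    hr1 (by rwa [hre]) (by rwa [hre, hre]) (by simp) (hd.fun_add hdw) (hh.add hw) hpos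
  rw [hre, hre] at hmain
  rw [eq_sub_of_add_eq hadd.symm]
  exact (norm_sub_le _ _).trans (add_le_add hmain
    (norm_verticalIntegral_logCorrection_mul_perronKernel_le κ t hx hb0 (hb.trans_le hσ)))

lemma hasGrowthOn_of_re_add_logCorrection_nonneg (hr : 0 < r) (hα : 0 ≤ α) (hαb : α < b)
    (hd : DifferentiableOn ℂ h (re ⁻¹' Set.Ioi α))
    (hpos : ∀ s : ℂ, α < s.re → 0 ≤ (h s + logCorrection κ t s).re)
    (ha : LSeriesSummable a c) (hha : ∀ s : ℂ, c ≤ s.re → h s = -LSeries a s) :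
    HasGrowthOn h r (re ⁻¹' Set.Ici b) := by
  have hw := hasGrowthOn_logCorrection κ t hr
  have hdw := differentiableOn_logCorrection κ t
  have hright : HasGrowthOn h r (re ⁻¹' Set.Ici c) :=
    ((hasGrowthOn_LSeries ha).mono_exponent hr.le).neg_left.congr'
      (eventually_principal.mpr fun s hs ↦ (hha s hs).symm) (by rfl)
  have hsum : HasGrowthOn (fun s ↦ h s + logCorrection κ t s) r (re ⁻¹' Set.Ici b) :=
    .of_re_nonneg (c := max c 0) hr.le hαb
      (hd.fun_add (hdw.mono (Set.preimage_mono fun u hu ↦ hα.trans hu.le))) hpos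
      ((hright.mono (Set.preimage_mono (Set.Ici_subset_Ici.mpr (le_max_left c 0)))).add
        (hw.mono (Set.preimage_mono (Set.Ici_subset_Ici.mpr (le_max_right c 0)))))
  simpa only [add_sub_cancel_right] using hsum.sub
    (hw.mono (Set.preimage_mono (Set.Ici_subset_Ici.mpr (hα.trans hαb.le))))

theorem re_mul_log_add_deriv_add_sum_nonneg (hx : 1 ≤ x) (hα : 0 ≤ α) (hαb : α < b)
    (hb : b < σ₀) (hσ : σ₀ ≤ σ) (hd : DifferentiableOn ℂ h (re ⁻¹' Set.Ioi α))
    (hpos : ∀ s : ℂ, α < s.re → 0 ≤ (h s + logCorrection κ t s).re)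
    (ha : LSeriesSummable a c) (hha : ∀ s : ℂ, c ≤ s.re → h s = -LSeries a s) :
    0 ≤ (h (σ + t * I) * Real.log x + deriv h (σ + t * I) +
        ∑ n ∈ Finset.Icc 1 ⌊x⌋₊, a n / (n : ℂ) ^ (σ + t * I : ℂ) * Real.log (x / n)).re +
      x ^ (b - σ) * ((h (σ₀ + t * I) + logCorrection κ t (σ₀ + t * I)).re / (σ₀ - b)) +
      x ^ (-σ) / 2 := by
  have hre : (σ + t * I : ℂ).re = σ := by simp
  have hdb := hd.mono (Set.preimage_mono (Set.Ici_subset_Ioi.mpr hαb))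
  have hh := hasGrowthOn_of_re_add_logCorrection_nonneg one_half_pos hα hαb hd hpos ha hha
  have hbound := (re_le_norm _).trans
    (norm_verticalIntegral_mul_perronKernel_le_of_re_add_logCorrection_nonneg one_half_pos
      one_half_lt_one hx (hα.trans hαb.le) hb hσ hdb hh fun s hs ↦ hpos s (hαb.trans_eq hs.symm))
  rw [mul_log_add_deriv_add_sum_eq_verticalIntegral (c := max c (σ + 1)) hx one_half_pos.le
    one_half_lt_one (by rw [hre]; exact hb.trans_le hσ)
    (by rw [hre]; exact (lt_add_one σ).trans_le (le_max_right _ _)) hdb hh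
    (ha.of_re_le_re (by simp)) fun s hs ↦ hha s ((le_max_left _ _).trans hs.ge),
    ← ofReal_neg, re_ofReal_mul, neg_mul]
  have hscaled := mul_le_mul_of_nonneg_left hbound (inv_nonneg.mpr two_pi_pos.le)
  rw [mul_add, inv_mul_cancel_left₀ two_pi_pos.ne', mul_inv, mul_assoc 2⁻¹ π⁻¹ (π * _),
    inv_mul_cancel_left₀ pi_ne_zero, ← mul_inv] at hscaled
  linarith

end ExplicitFormula

section HorizontalRays

open Filter Topology

lemma tendsto_LSeries_add_mul_I_atTop {f : ℕ → ℂ} {s : ℂ} (hf : LSeriesSummable f s) (t : ℝ) :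
    Tendsto (fun σ : ℝ ↦ LSeries f (σ + t * I)) atTop (𝓝 (f 1)) := by
  set g : ℕ → ℂ := fun n ↦ f n / (n : ℂ) ^ (t * I)
  have hterm (z : ℂ) : LSeries.term f (z + t * I) = LSeries.term g z := by
    ext n
    rcases eq_or_ne n 0 with rfl | hn
    · simp
    · rw [LSeries.term_of_ne_zero hn, LSeries.term_of_ne_zero hn,
        cpow_add _ _ (Nat.cast_ne_zero.mpr hn), div_div, mul_comm]
  have hg : LSeriesSummable g (s - t * I) := by
    rwa [LSeriesSummable, ← hterm, sub_add_cancel]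
  have hlim := LSeries.tendsto_atTop (hg.abscissaOfAbsConv_le.trans_lt (EReal.coe_lt_top _))
  rw [show g 1 = f 1 by simp [g]] at hlim
  exact hlim.congr fun σ ↦ by rw [LSeries, LSeries, hterm]

lemma le_of_tendsto_of_hasDerivAt_nonneg {R R' : ℝ → ℝ} {σ₀ l : ℝ}
    (hR : ∀ u, σ₀ ≤ u → HasDerivAt R (R' u) u) (hR' : ∀ u, σ₀ ≤ u → 0 ≤ R' u)
    (hlim : Tendsto R atTop (𝓝 l)) : R σ₀ ≤ l := by
  have hmono : MonotoneOn R (Set.Ici σ₀) := by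
    refine monotoneOn_of_hasDerivWithinAt_nonneg (f' := R') (convex_Ici σ₀)
      (fun u hu ↦ (hR u hu).continuousAt.continuousWithinAt)
      (fun u hu ↦ (hR u (interior_subset hu)).hasDerivWithinAt)
      (fun u hu ↦ hR' u (interior_subset hu))
  exact ge_of_tendsto hlim ((eventually_ge_atTop σ₀).mono fun u hu ↦ hmono Set.self_mem_Ici hu hu)

lemma hasDerivAt_rpow_neg_div_log {x : ℝ} (hx : 1 < x) (σ : ℝ) :
    HasDerivAt (fun u : ℝ ↦ x ^ (-u) / Real.log x) (-x ^ (-σ)) σ := by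
  have hlog := Real.log_pos hx
  refine (((hasDerivAt_id' σ).fun_neg.const_rpow (zero_lt_one.trans hx)).div_const
    (Real.log x)).congr_deriv ?_
  field_simp

lemma tendsto_rpow_neg_atTop_of_one_lt {x : ℝ} (hx : 1 < x) :
    Tendsto (fun u : ℝ ↦ x ^ (-u)) atTop (𝓝 0) := by
  have hx0 : 0 < x := zero_lt_one.trans hx
  have hinv : -1 < x⁻¹ := by linarith [inv_pos.mpr hx0]
  simpa only [Real.inv_rpow hx0.le, Real.rpow_neg hx0.le] using
    tendsto_rpow_atTop_of_base_lt_one _ hinv (inv_lt_one_of_one_lt₀ hx)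

lemma tendsto_add_mul_I_atTop_of_eq_neg_LSeries {h : ℂ → ℂ} {a : ℕ → ℂ} {c : ℝ}
    (ha : LSeriesSummable a c) (ha1 : a 1 = 0) (hha : ∀ s, c ≤ s.re → h s = -LSeries a s) (t : ℝ) :
    Tendsto (fun σ : ℝ ↦ h (σ + t * I)) atTop (𝓝 0) := by
  have hneg := (tendsto_LSeries_add_mul_I_atTop ha t).neg
  rw [ha1, neg_zero] at hneg
  exact hneg.congr' ((eventually_ge_atTop c).mono fun σ hσ ↦ (hha _ (by simpa using hσ)).symm)

end HorizontalRays

section WeightedSum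

open Filter Topology

variable {a : ℕ → ℂ}

/-- The Dirichlet polynomial `∑_{n ≤ x} a(n) log (x / n) / (n ^ s log n)`, an antiderivative of
minus the sum in the explicit formula. The term `n = 1` is `0`, since `log 1 = 0` and division by
zero gives zero. -/
noncomputable def logWeightedSum (a : ℕ → ℂ) (x : ℝ) (s : ℂ) : ℂ :=
  ∑ n ∈ Finset.Icc 1 ⌊x⌋₊, a n / (n : ℂ) ^ s * ((Real.log (x / n) / Real.log n : ℝ) : ℂ)

lemma hasDerivAt_logWeightedSum (ha : a 1 = 0) (x : ℝ) (s : ℂ) :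
    HasDerivAt (logWeightedSum a x)
      (-∑ n ∈ Finset.Icc 1 ⌊x⌋₊, a n / (n : ℂ) ^ s * Real.log (x / n)) s := by
  unfold logWeightedSum
  rw [← Finset.sum_neg_distrib]
  refine HasDerivAt.fun_sum fun n hn ↦ ?_
  rcases (Finset.mem_Icc.mp hn).1.eq_or_lt with rfl | h1
  · simpa only [ha, zero_div, zero_mul, neg_zero] using hasDerivAt_const s (0 : ℂ)
  have hn0 : (n : ℂ) ≠ 0 := Nat.cast_ne_zero.mpr (by omega)
  have hlog : (Real.log n : ℂ) ≠ 0 :=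
    ofReal_ne_zero.mpr (Real.log_pos (Nat.one_lt_cast.mpr h1)).ne'
  have hpow : HasDerivAt (fun z : ℂ ↦ (n : ℂ) ^ (-z)) ((n : ℂ) ^ (-s) * Complex.log n * (-1)) s :=
    (hasDerivAt_id' s).fun_neg.const_cpow (Or.inl hn0)
  have hterm := (hpow.const_mul (a n)).mul_const ((Real.log (x / n) / Real.log n : ℝ) : ℂ)
  simp only [cpow_neg, ← div_eq_mul_inv, ← natCast_log] at hterm
  refine hterm.congr_deriv ?_
  rw [ofReal_div]
  field_simp

lemma tendsto_logWeightedSum_add_mul_I_atTop (a : ℕ → ℂ) (x t : ℝ) :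
    Tendsto (fun σ : ℝ ↦ logWeightedSum a x (σ + t * I)) atTop (𝓝 0) := by
  unfold logWeightedSum
  rw [← Finset.sum_const_zero (s := Finset.Icc 1 ⌊x⌋₊)]
  refine tendsto_finsetSum _ fun n hn ↦ ?_
  rcases (Finset.mem_Icc.mp hn).1.eq_or_lt with rfl | h1
  · simp
  have hn1 : (1 : ℝ) < n := Nat.one_lt_cast.mpr h1
  have hpow : Tendsto (fun σ : ℝ ↦ a n / (n : ℂ) ^ (σ + t * I : ℂ)) atTop (𝓝 0) := by
    refine tendsto_zero_iff_norm_tendsto_zero.mpr ?_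
    have hnorm (σ : ℝ) : ‖a n / (n : ℂ) ^ (σ + t * I : ℂ)‖ = ‖a n‖ * (n : ℝ) ^ (-σ) := by
      rw [norm_div, norm_natCast_cpow_of_pos (by omega), Real.rpow_neg n.cast_nonneg,
        div_eq_mul_inv]
      simp
    simpa only [hnorm, mul_zero] using (tendsto_rpow_neg_atTop_of_one_lt hn1).const_mul ‖a n‖
  simpa only [zero_mul] using hpow.mul_const _

end WeightedSum

section Integration

open Filter Topology

variable {F : ℂ → ℂ} {a : ℕ → ℂ} {α c κ t x : ℝ}

/-- A function of `u` whose derivative is the real part of the explicit formula for the logarithmic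
derivative of `F` at `u + it`, where `a` are the Dirichlet coefficients of `-F'/F`. -/
noncomputable def explicitFormulaPrimitive (F : ℂ → ℂ) (a : ℕ → ℂ) (x t u : ℝ) : ℝ :=
  Real.log ‖F (u + t * I)‖ * Real.log x + (logDeriv F (u + t * I)).re -
    (logWeightedSum a x (u + t * I)).re

lemma hasDerivAt_explicitFormulaPrimitive {u : ℝ} (hF : DifferentiableOn ℂ F (re ⁻¹' Set.Ioi α))
    (hF0 : ∀ s, α < s.re → F s ≠ 0) (ha1 : a 1 = 0) (x : ℝ) (hu : α < u) :
    HasDerivAt (explicitFormulaPrimitive F a x t)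
      (logDeriv F (u + t * I) * Real.log x + deriv (logDeriv F) (u + t * I) +
        ∑ n ∈ Finset.Icc 1 ⌊x⌋₊, a n / (n : ℂ) ^ (u + t * I : ℂ) * Real.log (x / n)).re u := by
  have hopen : IsOpen (re ⁻¹' Set.Ioi α) := isOpen_Ioi.preimage continuous_re
  have hmem : (u + t * I : ℂ) ∈ re ⁻¹' Set.Ioi α := by simpa using hu
  have hlogDeriv := (((differentiableOn_logDeriv hopen hF hF0).differentiableAt
    (hopen.mem_nhds hmem)).hasDerivAt.comp_add_const (u : ℂ) (t * I)).real_of_complex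
  have hsum := ((hasDerivAt_logWeightedSum ha1 x (u + t * I)).comp_add_const
    (u : ℂ) (t * I)).real_of_complex
  have h := (((hasDerivAt_log_norm_add_mul_I (hF.differentiableAt (hopen.mem_nhds hmem))
    (hF0 _ hmem)).mul_const (Real.log x)).fun_add hlogDeriv).fun_sub hsum
  rwa [neg_re, sub_neg_eq_add, ← re_mul_ofReal, ← add_re, ← add_re] at h

lemma tendsto_explicitFormulaPrimitive (x : ℝ) (ha : LSeriesSummable a c) (ha1 : a 1 = 0)
    (hFa : ∀ s, c ≤ s.re → logDeriv F s = -LSeries a s)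
    (hF1 : Tendsto (fun u : ℝ ↦ F (u + t * I)) atTop (𝓝 1)) :
    Tendsto (explicitFormulaPrimitive F a x t) atTop (𝓝 0) := by
  have hlog := (hF1.norm.log (by simp)).mul_const (Real.log x)
  have hlogDeriv := (continuous_re.tendsto 0).comp
    (tendsto_add_mul_I_atTop_of_eq_neg_LSeries ha ha1 hFa t)
  have hsum := (continuous_re.tendsto 0).comp (tendsto_logWeightedSum_add_mul_I_atTop a x t)
  have h := (hlog.add hlogDeriv).sub hsum
  rwa [norm_one, Real.log_one, zero_mul, zero_re, add_zero, _root_.sub_zero] at h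

theorem explicitFormulaPrimitive_le {b σ₀ : ℝ} (hx : 1 < x) (hα : 0 ≤ α) (hαb : α < b)
    (hb : b < σ₀) (hF : DifferentiableOn ℂ F (re ⁻¹' Set.Ioi α)) (hF0 : ∀ s, α < s.re → F s ≠ 0)
    (hpos : ∀ s, α < s.re → 0 ≤ (logDeriv F s + logCorrection κ t s).re)
    (ha : LSeriesSummable a c) (ha1 : a 1 = 0) (hFa : ∀ s, c ≤ s.re → logDeriv F s = -LSeries a s)
    (hF1 : Tendsto (fun u : ℝ ↦ F (u + t * I)) atTop (𝓝 1)) :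
    explicitFormulaPrimitive F a x t σ₀ ≤
      (x ^ (b - σ₀) * ((logDeriv F (σ₀ + t * I) + logCorrection κ t (σ₀ + t * I)).re / (σ₀ - b)) +
        x ^ (-σ₀) / 2) / Real.log x := by
  set A := (logDeriv F (σ₀ + t * I) + logCorrection κ t (σ₀ + t * I)).re / (σ₀ - b)
  have hsplit (u : ℝ) : x ^ (b - u) = x ^ b * x ^ (-u) := by
    rw [sub_eq_add_neg, Real.rpow_add (zero_lt_one.trans hx)]
  have hd := differentiableOn_logDeriv (isOpen_Ioi.preimage continuous_re) hF hF0
  have hderiv (u : ℝ) (hu : σ₀ ≤ u) :=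
    (hasDerivAt_explicitFormulaPrimitive (t := t) hF hF0 ha1 x (hαb.trans (hb.trans_le hu))).fun_sub
      ((hasDerivAt_rpow_neg_div_log hx u).const_mul (x ^ b * A + 1 / 2))
  have hlim := (tendsto_explicitFormulaPrimitive x ha ha1 hFa hF1).sub
    (((tendsto_rpow_neg_atTop_of_one_lt hx).div_const (Real.log x)).const_mul (x ^ b * A + 1 / 2))
  have hle := le_of_tendsto_of_hasDerivAt_nonneg hderiv (fun u hu ↦ by
    have h := re_mul_log_add_deriv_add_sum_nonneg hx.le hα hαb hb hu hd hpos ha hFa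
    rw [hsplit] at h
    linarith) hlim
  rw [hsplit]
  linear_combination hle

lemma log_norm_le_add_mul_sub {B σ₁ σ₀ : ℝ} (hα : α < σ₁) (hσ : σ₁ ≤ σ₀)
    (hF : DifferentiableOn ℂ F (re ⁻¹' Set.Ioi α)) (hF0 : ∀ s, α < s.re → F s ≠ 0)
    (hB : ∀ u ∈ Set.Icc σ₁ σ₀, -B ≤ (logDeriv F (u + t * I)).re) :
    Real.log ‖F (σ₁ + t * I)‖ ≤ Real.log ‖F (σ₀ + t * I)‖ + B * (σ₀ - σ₁) := by
  have hderiv (u : ℝ) (hu : u ∈ Set.Icc σ₁ σ₀) :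
      HasDerivAt (fun u : ℝ ↦ Real.log ‖F (u + t * I)‖) (logDeriv F (u + t * I)).re u := by
    have hmem : (u + t * I : ℂ) ∈ re ⁻¹' Set.Ioi α := by simpa using hα.trans_le hu.1
    exact hasDerivAt_log_norm_add_mul_I
      (hF.differentiableAt ((isOpen_Ioi.preimage continuous_re).mem_nhds hmem)) (hF0 _ hmem)
  have h := (convex_Icc σ₁ σ₀).mul_sub_le_image_sub_of_le_deriv
    (fun u hu ↦ (hderiv u hu).continuousAt.continuousWithinAt)
    (fun u hu ↦ (hderiv u (interior_subset hu)).differentiableAt.differentiableWithinAt)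
    (fun u hu ↦ (hB u (interior_subset hu)).trans_eq (hderiv u (interior_subset hu)).deriv.symm)
    σ₁ (Set.left_mem_Icc.mpr hσ) σ₀ (Set.right_mem_Icc.mpr hσ) hσ
  linarith

lemma rpow_neg_div_mul_log_le_one {d : ℝ} (hx : 0 < x) (hd : 3 / 4 ≤ d * Real.log x) :
    x ^ (-d) / (d * Real.log x) ≤ 1 := by
  rw [div_le_one (by linarith), Real.rpow_def_of_pos hx, mul_neg, Real.exp_neg,
    inv_le_iff_one_le_mul₀ (Real.exp_pos _), mul_comm (Real.log x)]
  nlinarith [Real.add_one_le_exp (d * Real.log x)]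

lemma rpow_mul_div_div_log_le {b P σ : ℝ} (hx : 1 < x) (hP : 0 ≤ P)
    (hb : 3 / 4 ≤ (σ - b) * Real.log x) : x ^ (b - σ) * (P / (σ - b)) / Real.log x ≤ P := by
  have h := mul_le_of_le_one_right hP (rpow_neg_div_mul_log_le_one (zero_lt_one.trans hx) hb)
  rwa [neg_sub, ← div_div, mul_div_assoc', mul_div_assoc', mul_comm P, mul_div_assoc] at h

lemma one_div_log_le_two (hx : 2 ≤ x) : 1 / Real.log x ≤ 2 := by
  have hlog : 1 / 2 ≤ Real.log x := by
    linarith [Real.log_two_gt_d9, Real.log_le_log two_pos hx]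
  rw [div_le_iff₀ (by linarith)]
  linarith

lemma re_logCorrection_add_mul_I (κ t σ : ℝ) :
    (logCorrection κ t (σ + t * I)).re = κ + Real.log (1 + σ) / 2 := by
  rw [re_logCorrection, ← log_re, re_log_one_add_add_mul_I_sub]

lemma neg_le_re_of_re_add_logCorrection_nonneg {h : ℂ → ℂ} {u v : ℝ} (hα : 0 ≤ α) (hu : α < u)
    (huv : u ≤ v) (hpos : ∀ s, α < s.re → 0 ≤ (h s + logCorrection κ t s).re) :
    -(κ + Real.log (1 + v) / 2) ≤ (h (u + t * I)).re := by
  have hu' := hpos (u + t * I) (by simpa using hu)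
  rw [add_re, re_logCorrection_add_mul_I] at hu'
  linarith [Real.log_le_log (by linarith : 0 < 1 + u) (by linarith : 1 + u ≤ 1 + v)]

theorem log_norm_mul_log_le {δ : ℝ} (hx : 2 ≤ x) (hα : 0 ≤ α) (hδ : 0 < δ) (hκ : 0 ≤ κ)
    (hF : DifferentiableOn ℂ F (re ⁻¹' Set.Ioi α)) (hF0 : ∀ s, α < s.re → F s ≠ 0)
    (hpos : ∀ s, α < s.re → 0 ≤ (logDeriv F s + logCorrection κ t s).re)
    (ha : LSeriesSummable a c) (ha1 : a 1 = 0) (hFa : ∀ s, c ≤ s.re → logDeriv F s = -LSeries a s)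
    (hF1 : Tendsto (fun u : ℝ ↦ F (u + t * I)) atTop (𝓝 1)) :
    Real.log ‖F ((α + δ : ℝ) + t * I)‖ * Real.log x ≤
      (logWeightedSum a x ((α + max δ (1 / Real.log x) : ℝ) + t * I)).re +
        (2 * κ + Real.log (1 + (α + max δ (1 / Real.log x))) + 1) := by
  have hlog : 0 < Real.log x := Real.log_pos (by linarith)
  have hinv := one_div_log_le_two hx
  set m := max δ (1 / Real.log x)
  have hδm : δ ≤ m := le_max_left _ _
  have hm : 1 ≤ m * Real.log x := (div_le_iff₀ hlog).mp (le_max_right _ _)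
  set B := κ + Real.log (1 + (α + m)) / 2 with hB
  have hB0 : 0 ≤ B := by
    linarith [Real.log_nonneg (by linarith : (1 : ℝ) ≤ 1 + (α + m))]
  have hshift : Real.log ‖F ((α + δ : ℝ) + t * I)‖ * Real.log x ≤
      Real.log ‖F ((α + m : ℝ) + t * I)‖ * Real.log x + B := by
    have hle := log_norm_le_add_mul_sub (t := t) (B := B) (by linarith : α < α + δ)
      (by linarith : α + δ ≤ α + m) hF hF0 fun u hu ↦
        neg_le_re_of_re_add_logCorrection_nonneg hα (by linarith [hu.1]) hu.2 hpos
    have hgap : (m - δ) * Real.log x ≤ 1 := by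
      rw [← le_div_iff₀ hlog, sub_le_iff_le_add]
      exact max_le (le_add_of_nonneg_left (by positivity)) (le_add_of_nonneg_right hδ.le)
    linarith [mul_le_mul_of_nonneg_right hle hlog.le, mul_le_mul_of_nonneg_left hgap hB0]
  have hInt := explicitFormulaPrimitive_le (b := α + m / 4) (by linarith : 1 < x) hα
    (by linarith) (by linarith : α + m / 4 < α + m) hF hF0 hpos ha ha1 hFa hF1
  have hmain := rpow_mul_div_div_log_le (b := α + m / 4) (σ := α + m) (by linarith : 1 < x)
    (hpos ((α + m : ℝ) + t * I) (by simpa using hδ.trans_le hδm)) (by linarith)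
  have hrest : x ^ (-(α + m)) / 2 / Real.log x ≤ 1 := by
    have hpow : x ^ (-(α + m)) ≤ 1 :=
      Real.rpow_le_one_of_one_le_of_nonpos (by linarith) (by linarith)
    rw [div_le_one hlog]
    linarith [(div_le_iff₀ hlog).mp hinv]
  rw [explicitFormulaPrimitive, add_div] at hInt
  rw [add_re (logDeriv F _) (logCorrection κ t _), re_logCorrection_add_mul_I] at hInt hmain
  linarith

end Integration

section DirichletLFunction

open DirichletCharacter Filter Topology

variable {q : ℕ} (χ : DirichletCharacter ℂ q)

/-- The coefficients `χ(n) Λ(n)` of the Dirichlet series of `-L'/L(s, χ)`. -/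
noncomputable def twistedVonMangoldt (n : ℕ) : ℂ := χ n * Λ n

lemma twistedVonMangoldt_one : twistedVonMangoldt χ 1 = 0 := by simp [twistedVonMangoldt]

lemma LSeriesSummable_twistedVonMangoldt {s : ℂ} (hs : 1 < s.re) :
    LSeriesSummable (twistedVonMangoldt χ) s :=
  LSeriesSummable_twist_vonMangoldt χ hs

lemma logDeriv_LFunction_eq_neg_LSeries [NeZero q] {s : ℂ} (hs : 1 < s.re) :
    logDeriv (LFunction χ) s = -LSeries (twistedVonMangoldt χ) s := by
  have h : LSeries (twistedVonMangoldt χ) s =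
      -deriv (LSeries fun n ↦ χ n) s / LSeries (fun n ↦ χ n) s :=
    LSeries_twist_vonMangoldt_eq χ hs
  rw [h, logDeriv_apply, deriv_LFunction_eq_deriv_LSeries χ hs, LFunction_eq_LSeries χ hs,
    neg_div, neg_neg]

lemma tendsto_LFunction_add_mul_I_atTop [NeZero q] (t : ℝ) :
    Tendsto (fun σ : ℝ ↦ LFunction χ (σ + t * I)) atTop (𝓝 1) := by
  have hsum : LSeriesSummable (fun n : ℕ ↦ χ n) 2 :=
    (LSeriesSummable_iff (NeZero.ne q) χ).mpr (by simp)
  have hlim := tendsto_LSeries_add_mul_I_atTop hsum t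
  rw [Nat.cast_one, map_one] at hlim
  exact hlim.congr' ((eventually_gt_atTop 1).mono fun σ hσ ↦
    (LFunction_eq_LSeries χ (by simpa using hσ)).symm)

lemma norm_add_one_le_one_add_abs_mul (t : ℝ) {s : ℂ} (hs : 0 ≤ s.re) :
    ‖s + 1‖ ≤ (1 + |t|) * ‖1 + s - t * I‖ := by
  have hle : ‖s + 1‖ ≤ ‖1 + s - t * I‖ + |t| := by
    rw [show s + 1 = 1 + s - t * I + t * I by ring]
    exact (norm_add_le _ _).trans_eq (by simp)
  nlinarith [one_le_norm_one_add_sub_mul_I t hs, abs_nonneg t]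

lemma log_one_add_abs_le (t : ℝ) : Real.log (1 + |t|) ≤ max 0 (Real.log t) + Real.log 2 := by
  have h := (le_max_right 0 _).trans (Real.posLog_add (x := 1) (y := |t|))
  rw [Real.posLog_abs, Real.posLog_one] at h
  linarith [Real.posLog_apply (x := t)]

lemma exists_re_logDeriv_LFunction_add_logCorrection_nonneg :
    ∃ C : ℝ, 0 ≤ C ∧ ∀ (q : ℕ) [NeZero q] (χ : DirichletCharacter ℂ q), χ ≠ 1 →
      χ.IsPrimitive → dirichletRH χ → ∀ (t : ℝ) (s : ℂ), 1 / 2 < s.re →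
      0 ≤ (logDeriv (LFunction χ) s +
        logCorrection (Real.log q / 2 + Real.log (1 + |t|) / 2 + C) t s).re := by
  obtain ⟨C, hC0, hC⟩ := exists_re_logDeriv_LFunction_nonneg
  refine ⟨C, hC0, fun q _ χ hχ hp hRH t s hs ↦ ?_⟩
  have hs0 : 0 ≤ s.re := by linarith
  have hnorm : 0 < ‖1 + s - t * I‖ := zero_lt_one.trans_le (one_le_norm_one_add_sub_mul_I t hs0)
  have hne : 0 < ‖s + 1‖ := by
    have hre := re_le_norm (s + 1)
    rw [add_re, one_re] at hre
    linarith
  have hlog := Real.log_le_log hne (norm_add_one_le_one_add_abs_mul t hs0)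
  rw [Real.log_mul (by positivity) hnorm.ne'] at hlog
  rw [add_re, re_logCorrection]
  linarith [hC q χ hχ hp hRH s hs]

lemma ne_one_of_isPrimitive [NeZero q] (hq : 1 < q) {χ : DirichletCharacter ℂ q}
    (hχ : χ.IsPrimitive) : χ ≠ 1 := by
  rintro rfl
  rw [IsPrimitive, conductor_one] at hχ
  exact hq.ne hχ

theorem exists_log_norm_LFunction_mul_log_le :
    ∃ C : ℝ, ∀ (q : ℕ) [NeZero q], 1 < q → ∀ χ : DirichletCharacter ℂ q, χ.IsPrimitive →
      dirichletRH χ → ∀ x δ t : ℝ, 2 ≤ x → 0 < δ → δ ≤ 2 →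
      Real.log ‖LFunction χ ((1 / 2 + δ : ℝ) + t * I)‖ * Real.log x ≤
        (logWeightedSum (twistedVonMangoldt χ) x
          ((1 / 2 + max δ (1 / Real.log x) : ℝ) + t * I)).re +
        (Real.log q + max 0 (Real.log t)) + C := by
  obtain ⟨C, hC0, hC⟩ := exists_re_logDeriv_LFunction_add_logCorrection_nonneg
  refine ⟨2 * C + 9 / 2, fun q _ hq χ hp hRH x δ t hx hδ hδ2 ↦ ?_⟩
  have hχ := ne_one_of_isPrimitive hq hp
  have : 0 ≤ Real.log q := Real.log_natCast_nonneg q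
  have : 0 ≤ Real.log (1 + |t|) := Real.log_nonneg (by linarith [abs_nonneg t])
  have h := log_norm_mul_log_le (c := (2 : ℝ)) hx one_half_pos.le hδ (by positivity)
    (differentiable_LFunction hχ).differentiableOn
    (fun s hs ↦ LFunction_ne_zero_of_dirichletRH hRH hχ hs) (hC q χ hχ hp hRH t)
    (LSeriesSummable_twistedVonMangoldt χ (by simp)) (twistedVonMangoldt_one χ)
    (fun s hs ↦ logDeriv_LFunction_eq_neg_LSeries χ (by linarith))
    (tendsto_LFunction_add_mul_I_atTop χ t)
  have hm : max δ (1 / Real.log x) ≤ 2 := max_le hδ2 (one_div_log_le_two hx)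
  have hlog := Real.log_le_sub_one_of_pos
    (by positivity : 0 < 1 + (1 / 2 + max δ (1 / Real.log x)))
  linarith [log_one_add_abs_le t, Real.log_two_lt_d9]

end DirichletLFunction

lemma sum_div_mul_log_mul_eq_logWeightedSum_div (a : ℕ → ℂ) (x : ℝ) (s : ℂ) :
    ∑ n ∈ Finset.Icc 1 ⌊x⌋₊, a n / ((n : ℂ) ^ s * (Real.log n : ℂ)) *
        ((Real.log (x / n) / Real.log x : ℝ) : ℂ) = logWeightedSum a x s / (Real.log x : ℂ) := by
  rw [logWeightedSum, Finset.sum_div]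
  refine Finset.sum_congr rfl fun n _ ↦ ?_
  rw [ofReal_div, ofReal_div]
  simp only [div_eq_mul_inv, mul_inv]
  ring

theorem stmt6_general :
    ∃ C : ℝ, ∀ (y t : ℝ), 2 ≤ y → ∀ (q : ℕ) [NeZero q], 1 < q →
      ∀ χ : DirichletCharacter ℂ q, χ.IsPrimitive → dirichletRH χ → ∀ x : ℝ, 2 ≤ x →
      Real.log ‖DirichletCharacter.LFunction χ (1 / 2 + 1 / Real.log y + t * I)‖ ≤
        (∑ n ∈ Finset.Icc 1 ⌊x⌋₊, χ n * (Λ n : ℂ) /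
            ((n : ℂ) ^ (((1 / 2 + max (1 / Real.log y) (1 / Real.log x) : ℝ) : ℂ) + t * I) *
              (Real.log n : ℂ)) *
            ((Real.log (x / n) / Real.log x : ℝ) : ℂ)).re
          + (Real.log q + max 0 (Real.log t)) / Real.log x + C / Real.log x := by
  obtain ⟨C, hC⟩ := exists_log_norm_LFunction_mul_log_le
  refine ⟨C, fun y t hy q _ hq χ hp hRH x hx ↦ ?_⟩
  have hlog : 0 < Real.log x := Real.log_pos (by linarith)
  have hlogy : 0 < Real.log y := Real.log_pos (by linarith)
  have hs : (1 / 2 + 1 / Real.log y + t * I : ℂ) =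
      ((1 / 2 + 1 / Real.log y : ℝ) : ℂ) + t * I := by push_cast; rfl
  have hsum (s : ℂ) := sum_div_mul_log_mul_eq_logWeightedSum_div (twistedVonMangoldt χ) x s
  simp only [twistedVonMangoldt] at hsum
  rw [hs, hsum, div_ofReal_re, ← add_div, ← add_div, le_div_iff₀ hlog]
  exact hC q hq χ hp hRH x (1 / Real.log y) t hx (by positivity) (one_div_log_le_two hy)

theorem stmt6 :
    ∃ C : ℝ, ∀ (y t : ℝ), 2 ≤ y → ∀ (q : ℕ) [NeZero q], 1 < q →
      ∀ χ : DirichletCharacter ℂ q, χ.IsPrimitive → dirichletRH χ →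
      ∀ x : ℝ, 2 ≤ x → x ≤ (q : ℝ) →
      Real.log (‖
          (DirichletCharacter.LFunction χ (1 / 2 + 1 / Real.log y + t * Complex.I))‖)
      ≤ (∑ n ∈ Finset.Icc 1 ⌊x⌋₊,
            χ n * (ArithmeticFunction.vonMangoldt n : ℂ) /
              ((n : ℂ) ^ (((1 / 2 + max (1 / Real.log y) (1 / Real.log x) : ℝ) : ℂ)
                  + t * Complex.I) * (Real.log n : ℂ)) *
              ((Real.log (x / n) / Real.log x : ℝ) : ℂ)).re
        + (Real.log q + max 0 (Real.log t)) / Real.log x + C / Real.log x := by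
  obtain ⟨C, hC⟩ := stmt6_general
  exact ⟨C, fun y t hy q _ hq χ hp hRH x hx _ ↦ hC y t hy q hq χ hp hRH x hx⟩
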